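/- Let m and d be integers with m ≥ 2 and d ≥ 2, and let G = {1,…,m}^d be the d-dimensional grid equipped with the ℓ1 metric (the shortest-path metric of the grid graph). There exists a universal constant c > 0 (independent of m and d) such that: for every C ≥ 1 and every map F : TC(G) → L_1 with bi-Lipschitz distortion at most C, one has C ≥ c·d·log m. -/

import Mathlib

open MeasureTheory Finset

noncomputable section

/-- Points of the grid `{1,…,m}^d` (coordinates taken 0-based). -/
abbrev GPt (m d : ℕ) := Fin d → Fin m

/-- The ℓ1 metric on the grid `{1,…,m}^d` (the shortest-path metric of the grid graph). -/
def gdistM {m d : ℕ} (u v : GPt m d) : ℝ := ∑ i, |((u i : ℕ) : ℝ) - ((v i : ℕ) : ℝ)|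

/-- The transportation cost norm on signed measures of total mass `0` on the grid,
via Kantorovich duality. -/
def tcNormG (m d : ℕ) (μ : GPt m d → ℝ) : ℝ :=
  sSup {r : ℝ | ∃ f : GPt m d → ℝ,
    (∀ u v, |f u - f v| ≤ gdistM u v) ∧ r = |∑ x, f x * μ x|}

/-- The Lebesgue space `L_1(0,1)`. -/
abbrev L1Space : Type := Lp ℝ 1 (volume.restrict (Set.Ioo (0:ℝ) 1))

/-!
It suffices to embed `TC` of a subgrid of side `2 ^ k`, where `k` is of order `log m`. For each of
the `k` dyadic scales `s`, cut this grid into blocks of side `s`, choose an exponential (in `d`)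
number of random points in each block, and let the discrepancy be `1 / s` times the difference
between the resulting empirical measure and the uniform measure. A ball of radius a small multiple
of `s * d` is so small in high dimension that the sample points are far from most of the grid, so
every discrepancy has `TC` norm of order `d`, and the norms add up to order `d * k`.

For a real function `f` on the grid, however, the sum over all scales of the expected absolute
pairings of `f` with the discrepancies is only `O(1 / d)` times the mean `ℓ₁` norm of the gradient
of `f`: by the coarea formula `f` may be taken to be an indicator, whose pairings are dominated by
a single critical scale, thanks to a variance bound at finer scales and the trivial bound at coarser
ones, and the isoperimetric inequality in the grid identifies that scale. Being an inequality
between averages of absolute values, this passes to functions valued in `L¹`, that is, to linear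
maps `T : TC → L¹`. If `‖T μ‖ ≤ C ‖μ‖`, the gradient is at most `d * C`, so the expected norms of
the images of the discrepancies add up to `O(C)`.

A bi-Lipschitz map need not be linear, but after mollification it is differentiable, its derivatives
inherit the upper bound `C`, and integrating them along segments bounds the average increments of
the map over a large ball, which the lower Lipschitz bound compares with the `TC` norms.
-/

open scoped BigOperators

namespace TCGrid

section Variation

theorem abs_sub_le_sum_abs_succ_sub {α : Type*} [Fintype α] [LinearOrder α] [LocallyFiniteOrder α]
    [SuccOrder α] (g : α → ℝ) (a b : α) :
    |g a - g b| ≤ ∑ c, |g (Order.succ c) - g c| := by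
  wlog hab : a ≤ b generalizing a b
  · rw [abs_sub_comm]
    exact this b a (le_of_not_ge hab)
  suffices h : |g a - g b| ≤ ∑ c ∈ Ico a b, |g (Order.succ c) - g c| from
    h.trans (sum_le_univ_sum_of_nonneg fun _ => abs_nonneg _)
  induction hab using Succ.rec with
  | rfl => simp
  | succ b hab ih =>
    by_cases hb : IsMax b
    · rwa [Order.succ_eq_iff_isMax.mpr hb]
    · rw [← insert_Ico_right_eq_Ico_succ_of_not_isMax hab hb, sum_insert right_notMem_Ico,
        add_comm, abs_sub_comm (g (Order.succ b))]
      exact (abs_sub_le _ (g b) _).trans (by gcongr)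

theorem abs_sub_le_mul_expect {m : ℕ} (g : Fin m → ℝ) (a b : Fin m) :
    |g a - g b| ≤ m * 𝔼 c, |g (Order.succ c) - g c| := by
  have : (m : ℝ) ≠ 0 := by exact_mod_cast (Fin.pos a).ne'
  rw [Fintype.expect_eq_sum_div_card, Fintype.card_fin, mul_div_cancel₀ _ this]
  exact abs_sub_le_sum_abs_succ_sub g a b

theorem expect_cons {α : Type*} [Fintype α] {d : ℕ} (h : (Fin (d + 1) → α) → ℝ) :
    𝔼 x, h x = 𝔼 t, 𝔼 x : Fin d → α, h (Fin.cons t x) := by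
  rw [← expect_product' univ univ fun t x => h (Fin.cons t x), univ_product_univ]
  exact (Fintype.expect_equiv (Fin.consEquiv fun _ => α) _ _ fun _ => rfl).symm

/-- The normalised `L¹` norm of the discrete gradient of `h`. Increments leaving the grid vanish,
because `Order.succ` fixes the last element of `Fin m`. -/
def meanVariation {m d : ℕ} (h : GPt m d → ℝ) : ℝ :=
  𝔼 x, ∑ i, |h (Function.update x i (Order.succ (x i))) - h x|

theorem meanVariation_nonneg {m d : ℕ} (h : GPt m d → ℝ) : 0 ≤ meanVariation h :=
  expect_nonneg fun _ _ => sum_nonneg fun _ _ => abs_nonneg _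

theorem meanVariation_cons {m d : ℕ} (h : GPt m (d + 1) → ℝ) :
    meanVariation h = 𝔼 t, meanVariation (fun x => h (Fin.cons t x)) +
      𝔼 t, 𝔼 x : GPt m d, |h (Fin.cons (Order.succ t) x) - h (Fin.cons t x)| := by
  simp only [meanVariation, expect_cons, Fin.sum_univ_succ, Fin.cons_zero, Fin.cons_succ,
    Fin.update_cons_zero, ← Fin.cons_update, expect_add_distrib]
  exact add_comm _ _

theorem meanVariation_const_sub {m d : ℕ} (a : ℝ) (h : GPt m d → ℝ) :
    meanVariation (fun x => a - h x) = meanVariation h := by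
  simp only [meanVariation, sub_sub_sub_cancel_left, abs_sub_comm]

theorem expect_expect_abs_sub_le {m d : ℕ} (h : GPt m d → ℝ) :
    𝔼 x, 𝔼 y, |h x - h y| ≤ m * meanVariation h := by
  rcases eq_or_ne m 0 with rfl | hm
  · rcases d with _ | d <;> simp [expect, meanVariation]
  have : NeZero m := ⟨hm⟩
  induction d with
  | zero => simp [meanVariation]
  | succ d ih =>
    have triangle (t x s y) : |h (Fin.cons t x) - h (Fin.cons s y)| ≤
        |h (Fin.cons t x) - h (Fin.cons t y)| +
          m * 𝔼 c, |h (Fin.cons (Order.succ c) y) - h (Fin.cons c y)| :=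
      (abs_sub_le _ (h (Fin.cons t y)) _).trans
        (by grw [abs_sub_le_mul_expect fun c => h (Fin.cons c y)])
    calc 𝔼 x, 𝔼 y, |h x - h y|
        = 𝔼 t, 𝔼 x, 𝔼 s, 𝔼 y, |h (Fin.cons t x) - h (Fin.cons s y)| := by
          simp only [expect_cons]
      _ ≤ 𝔼 t : Fin m, 𝔼 x, 𝔼 _s : Fin m, 𝔼 y, (|h (Fin.cons t x) - h (Fin.cons t y)| +
          m * 𝔼 c, |h (Fin.cons (Order.succ c) y) - h (Fin.cons c y)|) := by
          gcongr; exact triangle _ _ _ _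
      _ = 𝔼 t, 𝔼 x : GPt m d, 𝔼 y, |h (Fin.cons t x) - h (Fin.cons t y)| +
          m * 𝔼 c, 𝔼 y : GPt m d, |h (Fin.cons (Order.succ c) y) - h (Fin.cons c y)| := by
          simp only [expect_add_distrib, Fintype.expect_const, ← mul_expect]
          rw [expect_comm univ univ fun (y : GPt m d) c => _]
      _ ≤ m * meanVariation h := by
          rw [meanVariation_cons, mul_add]
          gcongr
          rw [mul_expect]
          exact expect_le_expect fun t _ => ih fun x => h (Fin.cons t x)

theorem slice_sub_expect_le {m d : ℕ} (h : GPt m (d + 1) → ℝ) (t₀ : Fin m) :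
    𝔼 x, h (Fin.cons t₀ x) - 𝔼 x, h x ≤
      m * 𝔼 t, 𝔼 x : GPt m d, |h (Fin.cons (Order.succ t) x) - h (Fin.cons t x)| := by
  have : NeZero m := ⟨(Fin.pos t₀).ne'⟩
  calc 𝔼 x, h (Fin.cons t₀ x) - 𝔼 x, h x
      = 𝔼 t, 𝔼 x : GPt m d, (h (Fin.cons t₀ x) - h (Fin.cons t x)) := by
        simp only [expect_cons, expect_sub_distrib, Fintype.expect_const]
    _ ≤ 𝔼 _t : Fin m, 𝔼 x : GPt m d,
        m * 𝔼 c, |h (Fin.cons (Order.succ c) x) - h (Fin.cons c x)| := by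
        gcongr with t _ x
        exact (le_abs_self _).trans (abs_sub_le_mul_expect (fun c => h (Fin.cons c x)) _ _)
    _ = m * 𝔼 t, 𝔼 x : GPt m d, |h (Fin.cons (Order.succ t) x) - h (Fin.cons t x)| := by
        rw [Fintype.expect_const, ← mul_expect, expect_comm]

end Variation

section Isoperimetry

theorem entropy_gap_le {ρ A M : ℝ} (hρ : 0 < ρ) (hA : 0 ≤ A) (hAM : A ≤ M) :
    (1 + Real.log ρ) / ρ * A + A * Real.log M / ρ ≤ M + A * Real.log A / ρ := by
  rcases hA.eq_or_lt with rfl | hA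
  · simpa using hAM
  have hM : 0 < M := hA.trans_le hAM
  have h := Real.log_le_sub_one_of_pos (x := ρ * M / A) (by positivity)
  rw [Real.log_div (by positivity) hA.ne', Real.log_mul hρ.ne' hM.ne'] at h
  have h' := mul_le_mul_of_nonneg_left h (show 0 ≤ A / ρ by positivity)
  have e : A / ρ * (ρ * M / A - 1) = M - A / ρ := by field_simp
  rw [e] at h'
  linear_combination h'

theorem expect_mul_log_le {ι : Type*} [Fintype ι] (a : ι → ℝ) (ha : ∀ t, 0 ≤ a t) {M : ℝ}
    (haM : ∀ t, a t ≤ M) : 𝔼 t, a t * Real.log (a t) ≤ (𝔼 t, a t) * Real.log M := by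
  rw [expect_mul]
  refine expect_le_expect fun t _ => ?_
  rcases (ha t).eq_or_lt with h0 | h0
  · simp [← h0]
  · exact mul_le_mul_of_nonneg_left (Real.log_le_log h0 (haM t)) h0.le

-- The slope `(1 + log ρ) / ρ` with respect to `d` is the tangent at `ρ` in the variational formula
-- for the isoperimetric profile `A ^ (1 - 1 / d)`; being linear in `A`, the bound tensorises.
theorem entropy_isoperimetry {m d : ℕ} [NeZero m] {ρ : ℝ} (hρ : 0 < ρ) (h : GPt m d → ℝ)
    (h01 : ∀ x, h x = 0 ∨ h x = 1) :
    d * ((1 + Real.log ρ) / ρ - 1) * 𝔼 x, h x ≤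
      m * meanVariation h + (𝔼 x, h x) * Real.log (𝔼 x, h x) / ρ := by
  induction d with
  | zero =>
    have entropy_zero (x) : h x * Real.log (h x) = 0 := by rcases h01 x with h | h <;> simp [h]
    simp [meanVariation, entropy_zero]
  | succ d ih =>
    have hnn (x) : 0 ≤ h x := by rcases h01 x with h | h <;> simp [h]
    set a : Fin m → ℝ := fun t => 𝔼 x : GPt m d, h (Fin.cons t x)
    have ha0 (t) : 0 ≤ a t := expect_nonneg fun _ _ => hnn _
    obtain ⟨t₀, ht₀⟩ := Finite.exists_max a
    have mean : 𝔼 x, h x = 𝔼 t, a t := expect_cons h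
    set A := 𝔼 t, a t with hA
    have slices : d * ((1 + Real.log ρ) / ρ - 1) * A ≤
        m * 𝔼 t, meanVariation (fun x : GPt m d => h (Fin.cons t x)) +
          A * Real.log (a t₀) / ρ := by
      calc d * ((1 + Real.log ρ) / ρ - 1) * A
          ≤ 𝔼 t, (m * meanVariation (fun x : GPt m d => h (Fin.cons t x)) +
            a t * Real.log (a t) / ρ) := by
            rw [hA, mul_expect]
            gcongr with t
            exact ih (fun x => h (Fin.cons t x)) fun x => h01 _
        _ ≤ _ := by
            rw [expect_add_distrib, ← mul_expect, ← expect_div]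
            grw [expect_mul_log_le a ha0 ht₀]
    have direction := slice_sub_expect_le h t₀
    have gap := entropy_gap_le hρ (expect_nonneg fun t _ => ha0 t)
      (expect_le univ_nonempty fun t _ => ht₀ t)
    rw [meanVariation_cons, mean]
    rw [mean] at direction
    push_cast
    linarith

theorem isoperimetry {m d : ℕ} [NeZero m] {ρ : ℝ} (hρ : 0 < ρ) (h : GPt m d → ℝ)
    (h01 : ∀ x, h x = 0 ∨ h x = 1) (hA : 𝔼 x, h x ≤ ρ ^ d) :
    d * (𝔼 x, h x) * (1 / ρ - 1) ≤ m * meanVariation h := by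
  have hA0 : 0 ≤ 𝔼 x, h x :=
    expect_nonneg fun x _ => by rcases h01 x with h | h <;> simp [h]
  rcases hA0.eq_or_lt with h0 | h0
  · rw [← h0]
    have := meanVariation_nonneg h
    simpa using by positivity
  have hlog : Real.log (𝔼 x, h x) ≤ d * Real.log ρ := by
    rw [← Real.log_pow]
    exact Real.log_le_log h0 hA
  have hent : (𝔼 x, h x) * Real.log (𝔼 x, h x) / ρ ≤ (𝔼 x, h x) * (d * Real.log ρ) / ρ := by
    gcongr
  linear_combination entropy_isoperimetry hρ h h01 + hent

end Isoperimetry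

section Comonotone

/-- Induction on the number of values of `f`: the top level set is peeled off. -/
theorem comonotone_induction {X : Type*} [Finite X] {p : (X → ℝ) → Prop} (const : ∀ c, p fun _ => c)
    (add : ∀ (f : X → ℝ) (s : Set X) (c : ℝ), 0 ≤ c → (∀ x ∈ s, ∀ y, f y ≤ f x) → p f →
      p fun x => f x + c * s.indicator 1 x)
    (f : X → ℝ) : p f := by
  induction hn : (Set.range f).ncard using Nat.strong_induction_on generalizing f with
  | _ n ih =>
    rcases isEmpty_or_nonempty X with hX | hX
    · exact (funext hX.elim : (fun _ => 0) = f) ▸ const 0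
    obtain ⟨u, hu⟩ := Finite.exists_max f
    rcases ({x | f x ≠ f u} : Set X).eq_empty_or_nonempty with hempty | hne
    · rw [funext fun x => not_not.mp (Set.eq_empty_iff_forall_notMem.mp hempty x)]
      exact const (f u)
    obtain ⟨v, hv, hvmax⟩ := Set.exists_max_image _ f (Set.toFinite _) hne
    have hvu : f v < f u := (hu v).lt_of_ne hv
    set f' : X → ℝ := fun x => min (f x) (f v) with hf'
    have decomposition : f = fun x => f' x + (f u - f v) * {x | f x = f u}.indicator 1 x := by
      funext x
      by_cases hx : f x = f u
      · simp [hf', hx, hvu.le]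
      · simp [hf', hx, hvmax x hx]
    rw [decomposition]
    refine add f' _ _ (sub_nonneg.mpr hvu.le) (fun x (hx : f x = f u) y => ?_) (ih _ ?_ f' rfl)
    · simp [hf', hx, hvu.le]
    · refine hn ▸ Set.ncard_lt_ncard ?_ (Set.finite_range f)
      refine Set.ssubset_iff_exists.mpr ⟨?_, f u, ⟨u, rfl⟩, ?_⟩
      · rintro _ ⟨x, rfl⟩
        rcases min_choice (f x) (f v) with h | h
        · exact ⟨x, h.symm⟩
        · exact ⟨v, h.symm⟩
      · rintro ⟨x, hx⟩
        exact ((min_le_right (f x) (f v)).trans_lt hvu).ne hx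

theorem abs_sub_add_mul_indicator {X : Type*} {f : X → ℝ} {s : Set X} {c : ℝ} (hc : 0 ≤ c)
    (hs : ∀ x ∈ s, ∀ y, f y ≤ f x) (x y : X) :
    |f x + c * s.indicator 1 x - (f y + c * s.indicator 1 y)| =
      |f x - f y| + c * |s.indicator 1 x - s.indicator 1 y| := by
  by_cases hx : x ∈ s <;> by_cases hy : y ∈ s
  · simp [hx, hy]
  · have := hs x hx y
    simp only [Set.indicator_of_mem hx, Set.indicator_of_notMem hy, Pi.one_apply, mul_one,
      mul_zero, add_zero, sub_zero, abs_one]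
    rw [abs_of_nonneg (by linarith), abs_of_nonneg (by linarith)]
    ring
  · have := hs y hy x
    simp only [Set.indicator_of_mem hy, Set.indicator_of_notMem hx, Pi.one_apply, mul_one,
      mul_zero, add_zero, zero_sub, abs_neg, abs_one]
    rw [abs_of_nonpos (by linarith), abs_of_nonpos (by linarith)]
    ring
  · simp [hx, hy]

theorem meanVariation_add_mul_indicator {m d : ℕ} {f : GPt m d → ℝ} {s : Set (GPt m d)} {c : ℝ}
    (hc : 0 ≤ c) (hs : ∀ x ∈ s, ∀ y, f y ≤ f x) :
    meanVariation (fun x => f x + c * s.indicator 1 x) =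
      meanVariation f + c * meanVariation (s.indicator 1) := by
  simp only [meanVariation, abs_sub_add_mul_indicator hc hs, sum_add_distrib, ← mul_sum,
    expect_add_distrib, ← mul_expect]

end Comonotone

section Independence

variable {W J : Type*} [Fintype W] [Fintype J]

theorem sq_expect_le_expect_sq [Nonempty J] (g : J → ℝ) : (𝔼 i, g i) ^ 2 ≤ 𝔼 i, g i ^ 2 := by
  simpa using expect_mul_sq_le_sq_mul_sq univ g 1

theorem expect_abs_sub_expect_le [Nonempty W] {f : W → ℝ} (hf : ∀ w, 0 ≤ f w) :
    𝔼 w, |f w - 𝔼 v, f v| ≤ 2 * 𝔼 w, f w := by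
  have hmean : 0 ≤ 𝔼 v, f v := expect_nonneg fun v _ => hf v
  calc 𝔼 w, |f w - 𝔼 v, f v| ≤ 𝔼 w, (f w + 𝔼 v, f v) := by
        gcongr with w
        exact abs_sub_le_iff.mpr ⟨by linarith, by linarith [hf w]⟩
    _ = 2 * 𝔼 w, f w := by rw [expect_add_distrib, Fintype.expect_const, two_mul]

theorem expect_sq_sub_expect_le [Nonempty W] {f : W → ℝ} (hf : ∀ v w, |f v - f w| ≤ 1) :
    𝔼 w, (f w - 𝔼 v, f v) ^ 2 ≤ 𝔼 w, 𝔼 v, |f w - f v| := by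
  gcongr with w
  calc (f w - 𝔼 v, f v) ^ 2 = (𝔼 v, (f w - f v)) ^ 2 := by
        rw [expect_sub_distrib, Fintype.expect_const]
    _ ≤ 𝔼 v, (f w - f v) ^ 2 := sq_expect_le_expect_sq _
    _ ≤ 𝔼 v, |f w - f v| := by
        gcongr with v
        rw [← sq_abs, sq]
        exact mul_le_of_le_one_left (abs_nonneg _) (hf w v)

variable [DecidableEq J]

theorem expect_pi_eq_expect_expect (i : J) (F : W → (J → W) → ℝ) :
    𝔼 ω : J → W, F (ω i) ω =
      𝔼 ω' : {j // j ≠ i} → W, 𝔼 w, F w ((Equiv.funSplitAt i W).symm (w, ω')) := by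
  rw [expect_comm, ← expect_product' univ univ fun w ω' => F w _, univ_product_univ]
  refine Fintype.expect_equiv (Equiv.funSplitAt i W) _ _ fun ω => ?_
  rw [← Equiv.symm_apply_apply (Equiv.funSplitAt i W) ω]
  simp

theorem expect_eval [Nonempty W] (φ : W → ℝ) (i : J) : 𝔼 ω : J → W, φ (ω i) = 𝔼 w, φ w := by
  rw [expect_pi_eq_expect_expect i fun w _ => φ w, Fintype.expect_const]

theorem expect_eval_mul_eval_eq_zero {φ : W → ℝ} (hφ : 𝔼 w, φ w = 0) (ψ : W → ℝ) {i j : J}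
    (hij : i ≠ j) : 𝔼 ω : J → W, φ (ω i) * ψ (ω j) = 0 := by
  rw [expect_pi_eq_expect_expect i fun w ω => φ w * ψ (ω j)]
  simp [hij.symm, ← expect_mul, hφ]

theorem expect_abs_expect_eval_le [Nonempty W] (g : J → W → ℝ) :
    𝔼 ω : J → W, |𝔼 i, g i (ω i)| ≤ 𝔼 i, 𝔼 w, |g i w| := by
  calc 𝔼 ω : J → W, |𝔼 i, g i (ω i)| ≤ 𝔼 ω : J → W, 𝔼 i, |g i (ω i)| := by
        gcongr; exact abs_expect_le _ _
    _ = 𝔼 i, 𝔼 w, |g i w| := by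
        rw [expect_comm]
        exact expect_congr rfl fun i _ => expect_eval (fun w => |g i w|) i

theorem expect_sq_expect_eval [Nonempty W] {g : J → W → ℝ} (hg : ∀ i, 𝔼 w, g i w = 0) :
    𝔼 ω : J → W, (𝔼 i, g i (ω i)) ^ 2 = (Fintype.card J : ℝ)⁻¹ * 𝔼 i, 𝔼 w, g i w ^ 2 := by
  have covariance (i j) : 𝔼 ω : J → W, g i (ω i) * g j (ω j) =
      if i = j then 𝔼 w, g i w ^ 2 else 0 := by
    split_ifs with hij
    · subst hij
      simp only [← sq, expect_eval fun w => g i w ^ 2]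
    · exact expect_eval_mul_eval_eq_zero (hg i) (g j) hij
  calc 𝔼 ω : J → W, (𝔼 i, g i (ω i)) ^ 2
      = 𝔼 i, 𝔼 j, 𝔼 ω : J → W, g i (ω i) * g j (ω j) := by
        simp only [sq, Fintype.expect_mul_expect]
        rw [expect_comm]
        exact expect_congr rfl fun i _ => expect_comm ..
    _ = (Fintype.card J : ℝ)⁻¹ * 𝔼 i, 𝔼 w, g i w ^ 2 := by
        simp only [covariance, Fintype.expect_eq_sum_div_card, sum_ite_eq, mem_univ, if_true]
        simp only [← sum_div]
        ring

theorem sq_expect_abs_expect_eval_le [Nonempty W] {g : J → W → ℝ} (hg : ∀ i, 𝔼 w, g i w = 0) :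
    (𝔼 ω : J → W, |𝔼 i, g i (ω i)|) ^ 2 ≤ (Fintype.card J : ℝ)⁻¹ * 𝔼 i, 𝔼 w, g i w ^ 2 := by
  grw [sq_expect_le_expect_sq]
  simp only [sq_abs]
  exact (expect_sq_expect_eval hg).le

end Independence

section Discrepancy

variable {M s m d n : ℕ}

/-- The grid `GPt m d` with `m = M * s`, cut into `M ^ d` blocks of side length `s`: the pair
`(b, w)` stands for the point `w` of the block `b`. -/
def blockEquiv (hm : M * s = m) : GPt M d × GPt s d ≃ GPt m d :=
  (Equiv.arrowProdEquivProdArrow (Fin d) (fun _ => Fin M) (fun _ => Fin s)).symm.trans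
    (Equiv.piCongrRight fun _ => finProdFinEquiv.trans (finCongr hm))

theorem val_blockEquiv (hm : M * s = m) (b : GPt M d) (w : GPt s d) (i : Fin d) :
    (blockEquiv hm (b, w) i : ℕ) = w i + s * b i := rfl

theorem expect_blockEquiv (hm : M * s = m) (h : GPt m d → ℝ) :
    𝔼 b, 𝔼 w, h (blockEquiv hm (b, w)) = 𝔼 x, h x := by
  rw [← expect_product' univ univ fun b w => h (blockEquiv hm (b, w)), univ_product_univ]
  exact Fintype.expect_equiv (blockEquiv hm) _ _ fun _ => rfl

theorem val_succ_of_not_isMax {a : Fin m} (ha : ¬ IsMax a) : ((Order.succ a : Fin m) : ℕ) = a + 1 :=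
  (Nat.covBy_iff_add_one_eq.mp
    (Fin.covBy_iff.mp (Order.covBy_succ_of_not_isMax ha))).symm

theorem blockEquiv_update_succ (hm : M * s = m) (b : GPt M d) (w : GPt s d) {i : Fin d}
    (hi : ¬ IsMax (w i)) :
    blockEquiv hm (b, Function.update w i (Order.succ (w i))) =
      Function.update (blockEquiv hm (b, w)) i (Order.succ (blockEquiv hm (b, w) i)) := by
  funext j
  rcases eq_or_ne j i with rfl | hj
  · rw [Function.update_self]
    refine (Order.succ_eq_of_covBy (Fin.covBy_iff.mpr (Nat.covBy_iff_add_one_eq.mpr ?_))).symm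
    rw [val_blockEquiv, val_blockEquiv, Function.update_self, val_succ_of_not_isMax hi]
    ring
  · rw [Function.update_of_ne hj]
    ext
    rw [val_blockEquiv, val_blockEquiv, Function.update_of_ne hj]

theorem expect_meanVariation_block_le (hm : M * s = m) (h : GPt m d → ℝ) :
    𝔼 b, meanVariation (fun w => h (blockEquiv hm (b, w))) ≤ meanVariation h := by
  simp only [meanVariation]
  rw [← expect_blockEquiv hm]
  refine expect_le_expect fun b _ => expect_le_expect fun w _ => sum_le_sum fun i _ => ?_
  by_cases hi : IsMax (w i)
  · rw [Order.succ_eq_iff_isMax.mpr hi, Function.update_eq_self, sub_self, abs_zero]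
    exact abs_nonneg _
  · rw [blockEquiv_update_succ hm b w hi]

/-- The difference between the empirical measure of sample points `ω`, `n` of them in each block,
and the uniform measure on the grid, divided by the side length `s` of the blocks; its
transportation cost norm is of order `d` as long as `n` is at most `(11 / 10) ^ d`. -/
def discrepancy (hm : M * s = m) (ω : GPt M d × Fin n → GPt s d) : GPt m d → ℝ :=
  (s : ℝ)⁻¹ • (𝔼 p, Pi.single (blockEquiv hm (p.1, ω p)) 1 - 𝔼 x, Pi.single x 1)

theorem dotProduct_expect {X ι : Type*} [Fintype X] [Fintype ι] (h : X → ℝ) (v : ι → X → ℝ) :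
    h ⬝ᵥ 𝔼 i, v i = 𝔼 i, h ⬝ᵥ v i := by
  simp only [dotProduct, expect_apply, mul_expect, expect_sum_comm]

theorem dotProduct_discrepancy (hm : M * s = m) (ω : GPt M d × Fin n → GPt s d)
    (h : GPt m d → ℝ) :
    h ⬝ᵥ discrepancy hm ω = (s : ℝ)⁻¹ *
      (𝔼 p : GPt M d × Fin n, h (blockEquiv hm (p.1, ω p)) - 𝔼 x, h x) := by
  simp only [discrepancy, dotProduct_smul, dotProduct_sub, dotProduct_expect, dotProduct_single_one,
    smul_eq_mul]

variable [NeZero n]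

theorem dotProduct_discrepancy_eq_expect_sub (hm : M * s = m) (ω : GPt M d × Fin n → GPt s d)
    (h : GPt m d → ℝ) :
    h ⬝ᵥ discrepancy hm ω = (s : ℝ)⁻¹ * 𝔼 p : GPt M d × Fin n,
      (h (blockEquiv hm (p.1, ω p)) - 𝔼 w, h (blockEquiv hm (p.1, w))) := by
  rw [dotProduct_discrepancy, expect_sub_distrib, ← expect_blockEquiv hm h, ← univ_product_univ,
    expect_product univ univ fun p : _ × Fin n => 𝔼 w, h (blockEquiv hm (p.1, w))]
  simp only [Fintype.expect_const]

theorem expect_abs_dotProduct_discrepancy (hm : M * s = m) (h : GPt m d → ℝ) :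
    𝔼 ω : GPt M d × Fin n → GPt s d, |h ⬝ᵥ discrepancy hm ω| =
      (s : ℝ)⁻¹ * 𝔼 ω : GPt M d × Fin n → GPt s d, |𝔼 p : GPt M d × Fin n,
        (h (blockEquiv hm (p.1, ω p)) - 𝔼 w, h (blockEquiv hm (p.1, w)))| := by
  simp only [dotProduct_discrepancy_eq_expect_sub, abs_mul, abs_inv, Nat.abs_cast]
  rw [mul_expect]

variable [NeZero s]

theorem const_dotProduct_discrepancy (hm : M * s = m) (ω : GPt M d × Fin n → GPt s d) (c : ℝ) :
    (fun _ => c) ⬝ᵥ discrepancy hm ω = 0 := by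
  simp [dotProduct_discrepancy_eq_expect_sub]

theorem expect_abs_dotProduct_discrepancy_le (hm : M * s = m) {h : GPt m d → ℝ}
    (hh : ∀ x, 0 ≤ h x) :
    𝔼 ω : GPt M d × Fin n → GPt s d, |h ⬝ᵥ discrepancy hm ω| ≤ 2 / s * 𝔼 x, h x := by
  rw [expect_abs_dotProduct_discrepancy, div_mul_eq_mul_div, div_eq_inv_mul]
  gcongr
  calc _ ≤ 𝔼 p : GPt M d × Fin n, 𝔼 w,
        |h (blockEquiv hm (p.1, w)) - 𝔼 v, h (blockEquiv hm (p.1, v))| :=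
        expect_abs_expect_eval_le fun (p : GPt M d × Fin n) w => _
    _ ≤ 𝔼 p : GPt M d × Fin n, 2 * 𝔼 w, h (blockEquiv hm (p.1, w)) := by
        gcongr with p
        exact expect_abs_sub_expect_le fun w => hh _
    _ = 2 * 𝔼 x, h x := by
        rw [← mul_expect, ← expect_blockEquiv hm h, ← univ_product_univ, expect_product]
        simp only [Fintype.expect_const]

theorem sq_expect_abs_dotProduct_discrepancy_le [NeZero M] (hm : M * s = m) {h : GPt m d → ℝ}
    (hh : ∀ x y, |h x - h y| ≤ 1) :
    (𝔼 ω : GPt M d × Fin n → GPt s d, |h ⬝ᵥ discrepancy hm ω|) ^ 2 ≤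
      meanVariation h / (s * n * M ^ d) := by
  set g : GPt M d × Fin n → GPt s d → ℝ :=
    fun p w => h (blockEquiv hm (p.1, w)) - 𝔼 v, h (blockEquiv hm (p.1, v)) with hg
  have centred (p) : 𝔼 w, g p w = 0 := by
    simp only [hg, expect_sub_distrib, Fintype.expect_const, sub_self]
  have variance : 𝔼 p, 𝔼 w, g p w ^ 2 ≤ s * meanVariation h := by
    calc 𝔼 p, 𝔼 w, g p w ^ 2
        ≤ 𝔼 p : GPt M d × Fin n, s * meanVariation (fun w => h (blockEquiv hm (p.1, w))) := by
          gcongr with p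
          exact (expect_sq_sub_expect_le fun v w => hh _ _).trans (expect_expect_abs_sub_le _)
      _ = s * 𝔼 b, meanVariation (fun w => h (blockEquiv hm (b, w))) := by
          rw [← mul_expect, ← univ_product_univ, expect_product]
          simp only [Fintype.expect_const]
      _ ≤ s * meanVariation h := by grw [expect_meanVariation_block_le]
  rw [expect_abs_dotProduct_discrepancy, mul_pow]
  grw [sq_expect_abs_expect_eval_le centred, variance]
  have hs : (s : ℝ) ≠ 0 := NeZero.ne _
  simp only [Fintype.card_prod, Fintype.card_pi, Fintype.card_fin, prod_const, card_univ,
    Nat.cast_mul, Nat.cast_pow]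
  refine le_of_eq ?_
  field_simp

end Discrepancy

section Scales

theorem sqrt_two_potential_gap {t : ℝ} (ht : 0 < t) :
    min t (t ^ 2)⁻¹ ≤ 12 * (√2 * t / (1 + √2 * t) - t / (1 + t)) := by
  have hlo : 1.41 ≤ √2 := Real.le_sqrt_of_sq_le (by norm_num)
  have hhi : √2 ≤ 1.42 := Real.sqrt_le_iff.mpr (by norm_num)
  have gap : 12 * (√2 * t / (1 + √2 * t) - t / (1 + t)) =
      12 * (√2 - 1) * t / ((1 + √2 * t) * (1 + t)) := by
    field_simp
    ring
  have numerator : 4.92 * t ≤ 12 * (√2 - 1) * t := by gcongr; linarith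
  have denominator : (1 + √2 * t) * (1 + t) ≤ (1 + 1.42 * t) * (1 + t) := by gcongr
  rw [gap, le_div_iff₀ (by positivity)]
  rcases le_total t 1 with ht1 | ht1
  · calc min t (t ^ 2)⁻¹ * ((1 + √2 * t) * (1 + t))
        ≤ t * ((1 + 1.42 * 1) * (1 + 1)) := by
          grw [min_le_left, denominator]
          gcongr
      _ ≤ 12 * (√2 - 1) * t := by linarith
  · calc min t (t ^ 2)⁻¹ * ((1 + √2 * t) * (1 + t))
        ≤ (t ^ 2)⁻¹ * ((t + 1.42 * t) * (t + t)) := by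
          grw [min_le_right, denominator]
          gcongr
      _ = 4.84 := by field_simp; norm_num
      _ ≤ 12 * (√2 - 1) * t := by linarith

theorem min_sqrt_inv_le_potential_gap {u : ℝ} (hu : 0 < u) :
    min √u u⁻¹ ≤ 12 * (√(2 * u) / (1 + √(2 * u)) - √u / (1 + √u)) := by
  have h := sqrt_two_potential_gap (Real.sqrt_pos.mpr hu)
  rwa [Real.sq_sqrt hu.le, ← Real.sqrt_mul zero_le_two] at h

theorem sum_min_sqrt_inv_le (k : ℕ) {u : ℝ} (hu : 0 < u) :
    ∑ j ∈ range k, min √(2 ^ j * u) (2 ^ j * u)⁻¹ ≤ 12 := by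
  set ψ : ℕ → ℝ := fun j => √(2 ^ j * u) / (1 + √(2 ^ j * u))
  have gap (j : ℕ) : min √(2 ^ j * u) (2 ^ j * u)⁻¹ ≤ 12 * (ψ (j + 1) - ψ j) := by
    have h := min_sqrt_inv_le_potential_gap (u := 2 ^ j * u) (by positivity)
    rwa [← mul_assoc, ← pow_succ'] at h
  have hψ0 : 0 ≤ ψ 0 := by positivity
  have hψ1 : ψ k ≤ 1 := div_le_one_of_le₀ (by linarith) (by positivity)
  calc ∑ j ∈ range k, min √(2 ^ j * u) (2 ^ j * u)⁻¹
      ≤ ∑ j ∈ range k, 12 * (ψ (j + 1) - ψ j) := sum_le_sum fun j _ => gap j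
    _ = 12 * (ψ k - ψ 0) := by rw [← mul_sum, sum_range_sub]
    _ ≤ 12 := by linarith

theorem le_mul_min_sqrt_inv {S K u : ℝ} (hu : 0 < u) (hsmall : u ≤ 1 → S ≤ K * √u)
    (hlarge : 1 < u → S ≤ K * u⁻¹) : S ≤ K * min √u u⁻¹ := by
  rcases le_or_gt u 1 with h | h
  · rw [min_eq_left ((Real.sqrt_le_one.mpr h).trans (one_le_inv_iff₀.mpr ⟨hu, h⟩))]
    exact hsmall h
  · rw [min_eq_right ((inv_le_one_of_one_le₀ h.le).trans (Real.one_le_sqrt.mpr h.le))]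
    exact hlarge h

theorem le_mul_sqrt_of_sq_le {S K u : ℝ} (hK : 0 ≤ K) (hu : 0 ≤ u) (h : S ^ 2 ≤ K ^ 2 * u) :
    S ≤ K * √u :=
  le_of_sq_le_sq (by rwa [mul_pow, Real.sq_sqrt hu]) (by positivity)

variable {d n : ℕ} {A b : ℝ}

theorem le_min_of_concentrated (hd : 2 ≤ d) (hdn : (d : ℝ) ≤ 5000 * n) (hb : 0 ≤ b) {ρ : ℝ}
    (hρ : 0 < ρ) (hρb : d * ρ ^ (d - 1) ≤ 21 * b) {r S : ℝ} (hr : 0 < r) (hS : S ≤ 2 * ρ ^ d / r)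
    (hS2 : S ^ 2 ≤ b * r ^ (d - 1) / n) :
    S ≤ 400 * b / d * min √(r / ρ) (r / ρ)⁻¹ := by
  have hd0 : (0 : ℝ) < d := by positivity
  have hn0 : (0 : ℝ) < n := by linarith
  have hρb' : ρ ^ (d - 1) ≤ 21 * b / d := (le_div_iff₀' hd0).mpr hρb
  refine le_mul_min_sqrt_inv (by positivity) (fun hu => ?_) fun _ => ?_
  · refine le_mul_sqrt_of_sq_le (by positivity) (by positivity) ?_
    calc S ^ 2 ≤ b * r ^ (d - 1) / n := hS2
      _ = b * (ρ ^ (d - 1) * (r / ρ) ^ (d - 1)) / n := by rw [← mul_pow, mul_div_cancel₀ _ hρ.ne']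
      _ ≤ b * (21 * b / d * (r / ρ)) / n := by
          grw [hρb', pow_le_of_le_one (by positivity) hu (by omega : d - 1 ≠ 0)]
      _ = (b / d) ^ 2 * (r / ρ) * (21 * d / n) := by field_simp
      _ ≤ (b / d) ^ 2 * (r / ρ) * 160000 := by
          gcongr
          rw [div_le_iff₀ hn0]
          linarith
      _ = (400 * b / d) ^ 2 * (r / ρ) := by ring
  · calc S ≤ 2 * (ρ ^ (d - 1) * ρ) / r := by rwa [← pow_succ, Nat.sub_add_cancel (by omega)]
      _ ≤ 2 * (21 * b / d * ρ) / r := by grw [hρb']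
      _ = 42 * b / d * (r / ρ)⁻¹ := by field_simp; ring
      _ ≤ 400 * b / d * (r / ρ)⁻¹ := by gcongr; norm_num

theorem le_min_of_spread (hd : 2 ≤ d) (hn : (d : ℝ) ^ 2 * (21 / 20) ^ d ≤ 5000 * n) (hb : 0 ≤ b)
    (hb1 : 1 ≤ (21 / 20) ^ d * b) {r S : ℝ} (hr : 0 < r) (hr1 : r ≤ 1)
    (hS2 : S ^ 2 ≤ b * r ^ (d - 1) / n) :
    S ≤ 400 * b / d * min √r r⁻¹ := by
  have hn0 : (0 : ℝ) < n := by
    have : 0 < (d : ℝ) ^ 2 * (21 / 20) ^ d := by positivity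
    linarith
  refine le_mul_min_sqrt_inv hr (fun _ => ?_) fun h => absurd hr1 h.not_ge
  refine le_mul_sqrt_of_sq_le (by positivity) hr.le ?_
  calc S ^ 2 ≤ b * r ^ (d - 1) / n := hS2
    _ ≤ b * ((21 / 20) ^ d * b) * r / n := by
        grw [pow_le_of_le_one hr.le hr1 (by omega : d - 1 ≠ 0), ← hb1, mul_one]
    _ = (b / d) ^ 2 * r * ((d : ℝ) ^ 2 * (21 / 20) ^ d / n) := by field_simp
    _ ≤ (b / d) ^ 2 * r * 160000 := by
        gcongr
        rw [div_le_iff₀ hn0]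
        linarith
    _ = (400 * b / d) ^ 2 * r := by ring

/-- At scale `r` the two bounds on `S` are `2A/r`, good for coarse scales, and a variance bound,
good for fine scales. The isoperimetric hypothesis puts their crossing at `ρ = A ^ (1 / d)`, unless
`A` is so close to `1` that `ρ = 1` will do. -/
theorem exists_critical_scale (hd : 2 ≤ d) (hn : (d : ℝ) ^ 2 * (21 / 20) ^ d ≤ 5000 * n)
    (hA : 0 ≤ A) (hAb : A ≤ b)
    (isoperimetric : ∀ ρ, 0 < ρ → A ≤ ρ ^ d → d * A * (1 / ρ - 1) ≤ b) :
    ∃ ρ > 0, ∀ r S : ℝ, 0 < r → r ≤ 1 → S ≤ 2 * A / r → S ^ 2 ≤ b * r ^ (d - 1) / n →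
      S ≤ 400 * b / d * min √(r / ρ) (r / ρ)⁻¹ := by
  have hb : 0 ≤ b := hA.trans hAb
  rcases hA.eq_or_lt with rfl | hA
  · refine ⟨1, one_pos, fun r S hr _ hS _ => ?_⟩
    simp only [mul_zero, zero_div] at hS
    exact hS.trans (by positivity)
  have hρd : (A ^ (d⁻¹ : ℝ)) ^ d = A := Real.rpow_inv_natCast_pow hA.le (by omega)
  have hρ : 0 < A ^ (d⁻¹ : ℝ) := by positivity
  set ρ := A ^ (d⁻¹ : ℝ)
  rcases le_or_gt ρ (20 / 21) with hρ1 | hρ1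
  · have hdn : (d : ℝ) ≤ 5000 * n := by
      have : (1 : ℝ) ≤ d := by exact_mod_cast one_le_two.trans hd
      refine le_trans ?_ hn
      calc (d : ℝ) ≤ d ^ 2 * 1 := by nlinarith
        _ ≤ d ^ 2 * (21 / 20) ^ d := by gcongr; exact one_le_pow₀ (by norm_num)
    have hρb : d * ρ ^ (d - 1) ≤ 21 * b := by
      calc d * ρ ^ (d - 1) ≤ d * ρ ^ (d - 1) * (21 * (1 - ρ)) :=
            le_mul_of_one_le_right (by positivity) (by linarith)
        _ = 21 * (d * A * (1 / ρ - 1)) := by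
            rw [← hρd, ← Nat.sub_add_cancel (by omega : 1 ≤ d), pow_succ]
            field_simp
            simp only [Nat.add_sub_cancel, mul_comm]
        _ ≤ 21 * b := by grw [isoperimetric ρ hρ hρd.ge]
    exact ⟨ρ, hρ, fun r S hr _ hS hS2 =>
      le_min_of_concentrated hd hdn hb hρ hρb hr (by rwa [hρd]) hS2⟩
  · refine ⟨1, one_pos, fun r S hr hr1 _ hS2 => ?_⟩
    rw [div_one]
    refine le_min_of_spread hd hn hb ?_ hr hr1 hS2
    calc (1 : ℝ) = (21 / 20 * (20 / 21)) ^ d := by norm_num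
      _ ≤ (21 / 20) ^ d * b := by
          rw [mul_pow]
          gcongr
          calc _ ≤ ρ ^ d := by gcongr
            _ ≤ b := hρd.trans_le hAb

end Scales

section Sobolev

variable {m d n : ℕ} [NeZero n]

theorem expect_le_mul_meanVariation [NeZero m] {h : GPt m d → ℝ} (h01 : ∀ x, h x = 0 ∨ h x = 1)
    (half : 𝔼 x, h x ≤ 1 / 2) : 𝔼 x, h x ≤ m * meanVariation h := by
  refine le_trans ?_ (expect_expect_abs_sub_le h)
  have hA : 0 ≤ 𝔼 x, h x :=
    expect_nonneg fun x _ => by rcases h01 x with h | h <;> simp [h]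
  have pairs : 𝔼 x, 𝔼 y, |h x - h y| = 2 * (𝔼 x, h x) * (1 - 𝔼 x, h x) := by
    calc 𝔼 x, 𝔼 y, |h x - h y| = 𝔼 x, 𝔼 y, (h x + h y - 2 * (h x * h y)) := by
          refine expect_congr rfl fun x _ => expect_congr rfl fun y _ => ?_
          rcases h01 x with hx | hx <;> rcases h01 y with hy | hy <;> norm_num [hx, hy]
      _ = 2 * (𝔼 x, h x) * (1 - 𝔼 x, h x) := by
          simp only [expect_sub_distrib, expect_add_distrib, Fintype.expect_const, ← mul_expect,
            ← expect_mul]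
          ring
  rw [pairs]
  nlinarith

theorem exists_discrepancy_scale [NeZero m] (hd : 2 ≤ d)
    (hn : (d : ℝ) ^ 2 * (21 / 20) ^ d ≤ 5000 * n) {h : GPt m d → ℝ}
    (h01 : ∀ x, h x = 0 ∨ h x = 1) (half : 𝔼 x, h x ≤ 1 / 2) :
    ∃ ρ > 0, ∀ {M s : ℕ} [NeZero M] [NeZero s] (hm : M * s = m),
      𝔼 ω : GPt M d × Fin n → GPt s d, |h ⬝ᵥ discrepancy hm ω| ≤
        400 * meanVariation h / d * min √((s / m : ℝ) / ρ) ((s / m : ℝ) / ρ)⁻¹ := by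
  obtain ⟨ρ, hρ, hmin⟩ := exists_critical_scale hd hn
    (expect_nonneg fun x _ => by rcases h01 x with h | h <;> simp [h])
    (expect_le_mul_meanVariation h01 half) fun ρ hρ hA => isoperimetry hρ h h01 hA
  refine ⟨ρ, hρ, fun {M s} _ _ hm => ?_⟩
  have hM : (0 : ℝ) < M := by exact_mod_cast NeZero.pos M
  have hs : (0 : ℝ) < s := by exact_mod_cast NeZero.pos s
  have hn : (0 : ℝ) < n := by exact_mod_cast NeZero.pos n
  have hm' : (m : ℝ) = M * s := by exact_mod_cast hm.symm
  have hmean := expect_abs_dotProduct_discrepancy_le (n := n) hm (h := h)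
    fun x => by rcases h01 x with h | h <;> simp [h]
  have hvar := sq_expect_abs_dotProduct_discrepancy_le (n := n) hm (h := h)
    fun x y => by rcases h01 x with hx | hx <;> rcases h01 y with hy | hy <;> simp [hx, hy]
  set T := 𝔼 ω : GPt M d × Fin n → GPt s d, |h ⬝ᵥ discrepancy hm ω|
  have hr : (s / m : ℝ) = (M : ℝ)⁻¹ := by rw [hm']; field_simp
  have hMd : (M : ℝ) ^ d = M ^ (d - 1) * M := by rw [← pow_succ, Nat.sub_add_cancel (by omega)]
  have key := hmin (s / m) (m * T) (by rw [hr]; positivity) ?_ ?_ ?_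
  · refine le_of_mul_le_mul_left (key.trans_eq ?_) (by rw [hm']; positivity : (0 : ℝ) < m)
    ring
  · rw [hr]
    exact inv_le_one_of_one_le₀ (by exact_mod_cast NeZero.one_le)
  · calc m * T ≤ m * (2 / s * 𝔼 x, h x) := by gcongr
      _ = 2 * (𝔼 x, h x) / (s / m) := by field_simp
  · calc (m * T) ^ 2 ≤ m ^ 2 * (meanVariation h / (s * n * M ^ d)) := by rw [mul_pow]; gcongr
      _ = m * meanVariation h * (s / m) ^ (d - 1) / n := by
          rw [hr, hMd, hm', inv_pow]
          field_simp

/-- Families of `n` points in each block of side length `2 ^ (j + 1)` of `GPt (2 ^ k) d`. -/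
abbrev DyadicSample (d n : ℕ) {k : ℕ} (j : Fin k) : Type :=
  GPt (2 ^ (k - ((j : ℕ) + 1))) d × Fin n → GPt (2 ^ ((j : ℕ) + 1)) d

/-- The discrepancy of a sample at the dyadic scale `2 ^ (j + 1)`. -/
def dyadicDiscrepancy {d n k : ℕ} {j : Fin k} (ω : DyadicSample d n j) : GPt (2 ^ k) d → ℝ :=
  discrepancy (pow_sub_mul_pow 2 (Nat.succ_le_of_lt j.2)) ω

theorem sum_dyadicDiscrepancy_le_of_expect_le_half (hd : 2 ≤ d)
    (hn : (d : ℝ) ^ 2 * (21 / 20) ^ d ≤ 5000 * n) {k : ℕ} {h : GPt (2 ^ k) d → ℝ}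
    (h01 : ∀ x, h x = 0 ∨ h x = 1) (half : 𝔼 x, h x ≤ 1 / 2) :
    ∑ j : Fin k, 𝔼 ω : DyadicSample d n j, |h ⬝ᵥ dyadicDiscrepancy ω| ≤
      4800 / d * meanVariation h := by
  obtain ⟨ρ, hρ, hscale⟩ := exists_discrepancy_scale hd hn h01 half
  have hβ := meanVariation_nonneg h
  set u : ℝ := 2 / 2 ^ k / ρ with hu
  calc ∑ j : Fin k, 𝔼 ω : DyadicSample d n j, |h ⬝ᵥ dyadicDiscrepancy ω|
      ≤ ∑ j : Fin k, 400 * meanVariation h / d * min √(2 ^ (j : ℕ) * u) (2 ^ (j : ℕ) * u)⁻¹ := by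
        refine sum_le_sum fun j _ =>
          (hscale (pow_sub_mul_pow 2 (Nat.succ_le_of_lt j.2))).trans_eq ?_
        have : ((2 ^ ((j : ℕ) + 1) : ℕ) / (2 ^ k : ℕ) : ℝ) / ρ = 2 ^ (j : ℕ) * u := by
          rw [hu]
          push_cast
          ring
        rw [this]
    _ = 400 * meanVariation h / d * ∑ j ∈ range k, min √(2 ^ j * u) (2 ^ j * u)⁻¹ := by
        rw [← mul_sum, Fin.sum_univ_eq_sum_range fun j => min √(2 ^ j * u) (2 ^ j * u)⁻¹]
    _ ≤ 400 * meanVariation h / d * 12 := by grw [sum_min_sqrt_inv_le k (by positivity)]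
    _ = 4800 / d * meanVariation h := by ring

theorem sum_dyadicDiscrepancy_le_of_indicator (hd : 2 ≤ d)
    (hn : (d : ℝ) ^ 2 * (21 / 20) ^ d ≤ 5000 * n) {k : ℕ} {h : GPt (2 ^ k) d → ℝ}
    (h01 : ∀ x, h x = 0 ∨ h x = 1) :
    ∑ j : Fin k, 𝔼 ω : DyadicSample d n j, |h ⬝ᵥ dyadicDiscrepancy ω| ≤
      4800 / d * meanVariation h := by
  rcases le_total (𝔼 x, h x) (1 / 2) with half | half
  · exact sum_dyadicDiscrepancy_le_of_expect_le_half hd hn h01 half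
  · have complement := sum_dyadicDiscrepancy_le_of_expect_le_half hd hn (h := fun x => 1 - h x)
      (fun x => by rcases h01 x with h | h <;> simp [h])
      (by rw [expect_sub_distrib, Fintype.expect_const]; linarith)
    have pairing {j : Fin k} (ω : DyadicSample d n j) :
        |(fun x => 1 - h x) ⬝ᵥ dyadicDiscrepancy ω| = |h ⬝ᵥ dyadicDiscrepancy ω| := by
      rw [show (fun x => 1 - h x) = (fun _ => 1) - h from rfl, sub_dotProduct, dyadicDiscrepancy,
        const_dotProduct_discrepancy, zero_sub, abs_neg]
    simpa only [meanVariation_const_sub, pairing] using complement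

theorem sum_dyadicDiscrepancy_le_meanVariation (hd : 2 ≤ d)
    (hn : (d : ℝ) ^ 2 * (21 / 20) ^ d ≤ 5000 * n) {k : ℕ} (f : GPt (2 ^ k) d → ℝ) :
    ∑ j : Fin k, 𝔼 ω : DyadicSample d n j, |f ⬝ᵥ dyadicDiscrepancy ω| ≤
      4800 / d * meanVariation f := by
  induction f using comonotone_induction with
  | const c =>
    have := meanVariation_nonneg fun _ : GPt (2 ^ k) d => c
    simp only [dyadicDiscrepancy, const_dotProduct_discrepancy, abs_zero, expect_const_zero,
      sum_const_zero]
    positivity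
  | add f s c hc hs ih =>
    have hind := sum_dyadicDiscrepancy_le_of_indicator hd hn (h := s.indicator 1)
      fun x => by by_cases hx : x ∈ s <;> simp [hx]
    have pairing {j : Fin k} (ω : DyadicSample d n j) :
        |(fun x => f x + c * s.indicator 1 x) ⬝ᵥ dyadicDiscrepancy ω| ≤
          |f ⬝ᵥ dyadicDiscrepancy ω| + c * |s.indicator 1 ⬝ᵥ dyadicDiscrepancy ω| := by
      rw [show (fun x => f x + c * s.indicator 1 x) = f + c • s.indicator 1 from rfl,
        add_dotProduct, smul_dotProduct, smul_eq_mul]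
      exact (abs_add_le _ _).trans_eq (by rw [abs_mul, abs_of_nonneg hc])
    calc _ ≤ ∑ j : Fin k, 𝔼 ω : DyadicSample d n j,
          (|f ⬝ᵥ dyadicDiscrepancy ω| + c * |s.indicator 1 ⬝ᵥ dyadicDiscrepancy ω|) := by
          gcongr; exact pairing _
      _ ≤ 4800 / d * meanVariation f + c * (4800 / d * meanVariation (s.indicator 1)) := by
          simp only [expect_add_distrib, sum_add_distrib, ← mul_expect, ← mul_sum]
          gcongr
      _ = _ := by rw [meanVariation_add_mul_indicator hc hs]; ring

end Sobolev

section SampleSize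

theorem exists_sample_size (d : ℕ) : ∃ n : ℕ, 1 ≤ n ∧ (n : ℝ) ≤ (11 / 10) ^ d ∧
    (d : ℝ) ^ 2 * (21 / 20) ^ d ≤ 5000 * n := by
  have one_le : (1 : ℝ) ≤ (11 / 10) ^ d := one_le_pow₀ (by norm_num)
  have hn : 1 ≤ ⌊((11 / 10) ^ d : ℝ)⌋₊ := Nat.le_floor (by rwa [Nat.cast_one])
  refine ⟨_, hn, Nat.floor_le (by positivity), ?_⟩
  have hn' : (1 : ℝ) ≤ ⌊((11 / 10) ^ d : ℝ)⌋₊ := by exact_mod_cast hn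
  have bernoulli : (d : ℝ) ≤ 50 * (51 / 50) ^ d := by
    have h := one_add_mul_le_pow (a := (1 / 50 : ℝ)) (by norm_num) d
    norm_num at h
    linarith
  calc (d : ℝ) ^ 2 * (21 / 20) ^ d ≤ (50 * (51 / 50) ^ d) ^ 2 * (21 / 20) ^ d := by gcongr
    _ = 2500 * ((51 / 50) ^ 2 * (21 / 20)) ^ d := by
        rw [mul_pow, mul_pow, ← pow_mul, ← pow_mul, mul_comm 2 d]
        ring
    _ ≤ 2500 * (11 / 10) ^ d := by gcongr; norm_num
    _ ≤ 2500 * (⌊((11 / 10) ^ d : ℝ)⌋₊ + 1) := by gcongr; exact (Nat.lt_floor_add_one _).le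
    _ ≤ 5000 * ⌊((11 / 10) ^ d : ℝ)⌋₊ := by linarith

end SampleSize

section Distance

variable {m d : ℕ}

/-- The standard embedding of the grid into `ℝ ^ d` with the `ℓ₁` norm, which is isometric. -/
def toL1 (x : GPt m d) : PiLp 1 fun _ : Fin d => ℝ := WithLp.toLp 1 fun i => ((x i : ℕ) : ℝ)

theorem gdistM_eq_dist (x y : GPt m d) : gdistM x y = dist (toL1 x) (toL1 y) := by
  simp only [gdistM, toL1, PiLp.dist_eq_of_L1, Real.dist_eq]

theorem gdistM_nonneg (x y : GPt m d) : 0 ≤ gdistM x y := by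
  rw [gdistM_eq_dist]
  exact dist_nonneg

theorem gdistM_update_succ_le (x : GPt m d) (i : Fin d) :
    gdistM (Function.update x i (Order.succ (x i))) x ≤ 1 := by
  rw [gdistM, sum_eq_single i (fun j _ hj => by simp [Function.update_of_ne hj]) (by simp),
    Function.update_self]
  by_cases hi : IsMax (x i)
  · simp [Order.succ_eq_iff_isMax.mpr hi]
  · simp [val_succ_of_not_isMax hi]

theorem exists_lipschitz_distance {ι : Type*} [Nonempty ι] (p : ι → GPt m d) :
    ∃ f : GPt m d → ℝ, (∀ x y, |f x - f y| ≤ gdistM x y) ∧ (∀ x, 0 ≤ f x) ∧ (∀ i, f (p i) = 0) ∧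
      ∀ x r, (∀ i, r ≤ gdistM (p i) x) → r ≤ f x := by
  refine ⟨fun x => Metric.infDist (toL1 x) (Set.range (toL1 ∘ p)), fun x y => ?_,
    fun x => Metric.infDist_nonneg, fun i => Metric.infDist_zero_of_mem ⟨i, rfl⟩,
    fun x r h => (Metric.le_infDist (Set.range_nonempty _)).mpr ?_⟩
  · rw [gdistM_eq_dist, ← Real.dist_eq]
    simpa using (Metric.lipschitz_infDist_pt (Set.range (toL1 ∘ p))).dist_le_mul (toL1 x) (toL1 y)
  · rintro _ ⟨i, rfl⟩
    rw [dist_comm, Function.comp_apply, ← gdistM_eq_dist]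
    exact h i

end Distance

section Volume

variable {d : ℕ}

theorem sum_pow_dist_le {t : ℝ} (ht0 : 0 < t) (ht1 : t < 1) (m x : ℕ) :
    ∑ y ∈ range m, t ^ Nat.dist x y ≤ (1 + t) / (1 - t) := by
  have geom (k : ℕ) : ∑ i ∈ range k, t ^ i ≤ 1 / (1 - t) := by
    rw [one_div]
    exact (Summable.sum_le_tsum _ (fun i _ => by positivity)
      (summable_geometric_of_lt_one ht0.le ht1)).trans_eq (tsum_geometric_of_lt_one ht0.le ht1)
  calc ∑ y ∈ range m, t ^ Nat.dist x y
      ≤ ∑ y ∈ range (x + 1 + m), t ^ Nat.dist x y :=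
        sum_le_sum_of_subset_of_nonneg (range_mono (by omega)) fun i _ _ => by positivity
    _ = ∑ i ∈ range (x + 1), t ^ i + t * ∑ i ∈ range m, t ^ i := by
        rw [sum_range_add, ← sum_range_reflect, mul_sum]
        congr 1 <;> refine sum_congr rfl fun i hi => ?_
        · rw [mem_range] at hi
          rw [Nat.dist_eq_sub_of_le_right (by omega)]
          congr 1
          omega
        · rw [Nat.dist_eq_sub_of_le (by omega), ← pow_succ']
          congr 1
          omega
    _ ≤ 1 / (1 - t) + t * (1 / (1 - t)) := by grw [geom, geom]
    _ = (1 + t) / (1 - t) := by ring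

theorem sum_rpow_gdistM_le {m : ℕ} {t : ℝ} (ht0 : 0 < t) (ht1 : t < 1) (x : GPt m d) :
    ∑ y, t ^ gdistM x y ≤ ((1 + t) / (1 - t)) ^ d := by
  have coordinate (a b : Fin m) : t ^ |((a : ℕ) : ℝ) - ((b : ℕ) : ℝ)| = t ^ Nat.dist a b := by
    rw [← Real.rpow_natCast]
    congr 1
    rcases le_total (a : ℕ) b with h | h
    · rw [Nat.dist_eq_sub_of_le h, Nat.cast_sub h, abs_sub_comm,
        abs_of_nonneg (sub_nonneg.mpr (Nat.cast_le.mpr h))]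
    · rw [Nat.dist_eq_sub_of_le_right h, Nat.cast_sub h,
        abs_of_nonneg (sub_nonneg.mpr (Nat.cast_le.mpr h))]
  calc ∑ y, t ^ gdistM x y = ∏ i, ∑ b : Fin m, t ^ Nat.dist (x i) b := by
        simp only [gdistM, Real.rpow_sum_of_pos ht0, coordinate, Fintype.prod_sum]
    _ ≤ ∏ _i : Fin d, (1 + t) / (1 - t) := by
        refine prod_le_prod (fun i _ => by positivity) fun i _ => ?_
        rw [Fin.sum_univ_eq_sum_range fun b => t ^ Nat.dist (x i) b]
        exact sum_pow_dist_le ht0 ht1 m _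
    _ = ((1 + t) / (1 - t)) ^ d := by rw [prod_const, card_univ, Fintype.card_fin]

theorem card_ball_mul_rpow_le {m : ℕ} {t : ℝ} (ht0 : 0 < t) (ht1 : t < 1) (x : GPt m d) (r : ℝ) :
    #{y | gdistM x y < r} * t ^ r ≤ ((1 + t) / (1 - t)) ^ d := by
  rw [← nsmul_eq_mul]
  calc #{y | gdistM x y < r} • t ^ r ≤ ∑ y with gdistM x y < r, t ^ gdistM x y :=
        card_nsmul_le_sum _ _ _ fun y hy =>
          Real.rpow_le_rpow_of_exponent_ge ht0 ht1.le (mem_filter.mp hy).2.le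
    _ ≤ ∑ y, t ^ gdistM x y :=
        sum_le_sum_of_subset_of_nonneg (filter_subset _ _) fun _ _ _ => by positivity
    _ ≤ _ := sum_rpow_gdistM_le ht0 ht1 x

theorem card_ball_le {m : ℕ} {s : ℝ} (hs : 2 ≤ s) (x : GPt m d) :
    (#{y | gdistM x y < d * s / 400} : ℝ) ≤ (12 / 19 * s) ^ d := by
  set t : ℝ := (3 * s - 5) / (3 * s + 5) with ht
  have hpos : 0 < 3 * s - 5 := by linarith
  have ht0 : 0 < t := by positivity
  have ht1 : t < 1 := (div_lt_one (by positivity)).mpr (by linarith)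
  have ratio : (1 + t) / (1 - t) = 3 / 5 * s := by
    rw [ht]
    field_simp
    ring
  have weight : 19 / 20 ≤ t ^ (s / 400) := by
    calc (19 / 20 : ℝ) ≤ 1 - 10 / (3 * s - 5) * (s / 400) := by
          have : 10 / (3 * s - 5) * (s / 400) ≤ 1 / 20 := by
            rw [div_mul_div_comm, div_le_div_iff₀ (by positivity) (by norm_num)]
            linarith
          linarith
      _ = (1 - t⁻¹) * (s / 400) + 1 := by
          rw [ht]
          field_simp
          ring
      _ ≤ Real.log t * (s / 400) + 1 := by grw [Real.one_sub_inv_le_log_of_pos ht0]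
      _ ≤ t ^ (s / 400) := by
          rw [Real.rpow_def_of_pos ht0]
          exact Real.add_one_le_exp _
  have volume : #{y | gdistM x y < d * s / 400} * (t ^ (s / 400)) ^ d ≤ (3 / 5 * s) ^ d := by
    rw [← Real.rpow_mul_natCast ht0.le, ← ratio]
    convert card_ball_mul_rpow_le ht0 ht1 x (d * s / 400) using 3
    ring
  calc (#{y | gdistM x y < d * s / 400} : ℝ)
      = #{y | gdistM x y < d * s / 400} * (19 / 20) ^ d * (20 / 19) ^ d := by
        rw [mul_assoc, ← mul_pow]
        norm_num
    _ ≤ (3 / 5 * s) ^ d * (20 / 19) ^ d := by grw [weight, volume]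
    _ = (12 / 19 * s) ^ d := by
        rw [← mul_pow]
        ring

end Volume

section TransportCost

variable {m d : ℕ} {μ : GPt m d → ℝ}

theorem abs_dotProduct_le_tcNormG (hμ : ∑ x, μ x = 0) {f : GPt m d → ℝ}
    (hf : ∀ x y, |f x - f y| ≤ gdistM x y) : |f ⬝ᵥ μ| ≤ tcNormG m d μ := by
  suffices ∃ B, ∀ g : GPt m d → ℝ, (∀ x y, |g x - g y| ≤ gdistM x y) → |g ⬝ᵥ μ| ≤ B by
    obtain ⟨B, hB⟩ := this
    refine le_csSup ⟨B, ?_⟩ ⟨f, hf, rfl⟩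
    rintro _ ⟨g, hg, rfl⟩
    exact hB g hg
  rcases isEmpty_or_nonempty (GPt m d) with _ | ⟨⟨o⟩⟩
  · exact ⟨0, fun g _ => by simp [dotProduct]⟩
  refine ⟨∑ x, gdistM x o * |μ x|, fun g hg => ?_⟩
  calc |∑ x, g x * μ x| = |∑ x, (g x - g o) * μ x| := by
        simp only [sub_mul, sum_sub_distrib, ← mul_sum, hμ, mul_zero, sub_zero]
    _ ≤ ∑ x, |g x - g o| * |μ x| := by
        simpa only [abs_mul] using abs_sum_le_sum_abs (fun x => (g x - g o) * μ x) univ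
    _ ≤ ∑ x, gdistM x o * |μ x| := by
        gcongr
        exact hg _ _

theorem tcNormG_le {B : ℝ}
    (h : ∀ f : GPt m d → ℝ, (∀ x y, |f x - f y| ≤ gdistM x y) → |f ⬝ᵥ μ| ≤ B) :
    tcNormG m d μ ≤ B := by
  refine csSup_le ⟨_, 0, fun x y => ?_, rfl⟩ ?_
  · simpa using gdistM_nonneg x y
  · rintro _ ⟨f, hf, rfl⟩
    exact h f hf

theorem tcNormG_single_sub_single_le (x y : GPt m d) :
    tcNormG m d (Pi.single x 1 - Pi.single y 1) ≤ gdistM x y := by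
  refine tcNormG_le fun f hf => ?_
  rw [dotProduct_sub, dotProduct_single_one, dotProduct_single_one]
  exact hf x y

/-- Signed measures of total mass zero on a finite set. -/
def zeroMass (X : Type*) [Fintype X] : Submodule ℝ (X → ℝ) where
  carrier := {μ | ∑ x, μ x = 0}
  zero_mem' := by simp
  add_mem' {μ ν} hμ hν := by
    simp only [Set.mem_ofPred_eq, Pi.add_apply, sum_add_distrib] at *
    rw [hμ, hν, add_zero]
  smul_mem' c μ hμ := by
    simp only [Set.mem_ofPred_eq, Pi.smul_apply, ← smul_sum] at *
    rw [hμ, smul_zero]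

/-- The transportation cost norm as a seminorm on the measures of total mass zero, where the
supremum defining it is finite. -/
def tcSeminorm (m d : ℕ) : Seminorm ℝ (zeroMass (GPt m d)) :=
  Seminorm.ofSMulLE (fun μ => tcNormG m d μ)
    (le_antisymm (tcNormG_le fun f _ => by simp)
      ((abs_nonneg _).trans (abs_dotProduct_le_tcNormG (f := 0) (by simp)
        fun x y => by simpa using gdistM_nonneg x y)))
    (fun μ ν => tcNormG_le fun f hf => by
      rw [Submodule.coe_add, dotProduct_add]
      exact (abs_add_le _ _).trans (add_le_add (abs_dotProduct_le_tcNormG μ.2 hf)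
        (abs_dotProduct_le_tcNormG ν.2 hf)))
    (fun c μ => tcNormG_le fun f hf => by
      rw [Submodule.coe_smul, dotProduct_smul, smul_eq_mul, abs_mul, Real.norm_eq_abs]
      exact mul_le_mul_of_nonneg_left (abs_dotProduct_le_tcNormG μ.2 hf) (abs_nonneg c))

end TransportCost

section DiscrepancyNorm

variable {M s m d n : ℕ}

theorem sum_discrepancy [NeZero n] [NeZero s] (hm : M * s = m) (ω : GPt M d × Fin n → GPt s d) :
    ∑ x, discrepancy hm ω x = 0 := by
  simpa [dotProduct] using const_dotProduct_discrepancy hm ω 1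

theorem div_two_le_expect {X : Type*} [Fintype X] [Nonempty X] {f : X → ℝ} {r : ℝ}
    (hf : ∀ x, 0 ≤ f x) (hr : 0 ≤ r) {S : Finset X} (hS : (#S : ℝ) ≤ Fintype.card X / 2)
    (hfS : ∀ x ∉ S, r ≤ f x) : r / 2 ≤ 𝔼 x, f x := by
  classical
  rw [Fintype.expect_eq_sum_div_card, le_div_iff₀ (by positivity)]
  calc r / 2 * Fintype.card X ≤ r * #Sᶜ := by
        rw [card_compl, Nat.cast_sub S.card_le_univ]
        nlinarith
    _ = ∑ _x ∈ Sᶜ, r := by rw [sum_const, nsmul_eq_mul, mul_comm]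
    _ ≤ ∑ x ∈ Sᶜ, f x := sum_le_sum fun x hx => hfS x (mem_compl.mp hx)
    _ ≤ ∑ x, f x := sum_le_sum_of_subset_of_nonneg (subset_univ _) fun x _ _ => hf x

theorem card_biUnion_ball_le (hm : M * s = m) (hs : 2 ≤ s) (hd : 2 ≤ d)
    (hn : (n : ℝ) ≤ (11 / 10) ^ d) (p : GPt M d × Fin n → GPt m d) :
    (#(univ.biUnion fun i => {x | gdistM (p i) x < d * s / 400}) : ℝ) ≤ (m : ℝ) ^ d / 2 := by
  calc (#(univ.biUnion fun i => {x | gdistM (p i) x < d * s / 400}) : ℝ)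
      ≤ ∑ i, (#{x | gdistM (p i) x < d * s / 400} : ℝ) := by exact_mod_cast card_biUnion_le
    _ ≤ ∑ _i : GPt M d × Fin n, (12 / 19 * s : ℝ) ^ d := by
        gcongr with i
        exact card_ball_le (by exact_mod_cast hs) (p i)
    _ = M ^ d * n * (12 / 19 * s) ^ d := by simp
    _ ≤ M ^ d * (11 / 10) ^ d * (12 / 19 * s) ^ d := by gcongr
    _ = (11 / 10 * (12 / 19)) ^ d * (M * s : ℕ) ^ d := by
        rw [← mul_pow, ← mul_pow, ← mul_pow]
        push_cast
        ring
    _ ≤ 1 / 2 * m ^ d := by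
        rw [hm]
        gcongr
        exact (pow_le_pow_of_le_one (by norm_num) (by norm_num) hd).trans (by norm_num)
    _ = (m : ℝ) ^ d / 2 := by ring

theorem div_le_tcNormG_discrepancy [NeZero n] [NeZero M] (hm : M * s = m) (hs : 2 ≤ s) (hd : 2 ≤ d)
    (hn : (n : ℝ) ≤ (11 / 10) ^ d) (ω : GPt M d × Fin n → GPt s d) :
    d / 800 ≤ tcNormG m d (discrepancy hm ω) := by
  have : NeZero s := ⟨by omega⟩
  have : NeZero m := ⟨hm ▸ mul_ne_zero (NeZero.ne M) (NeZero.ne s)⟩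
  obtain ⟨f, hlip, hnonneg, hzero, hfar⟩ :=
    exists_lipschitz_distance fun p : GPt M d × Fin n => blockEquiv hm (p.1, ω p)
  have mass : (d * s / 400 : ℝ) / 2 ≤ 𝔼 x, f x := by
    refine div_two_le_expect hnonneg (by positivity)
      ((card_biUnion_ball_le hm hs hd hn fun p => blockEquiv hm (p.1, ω p)).trans_eq (by simp))
      fun x hx => hfar x _ fun p => ?_
    by_contra! hp
    exact hx (mem_biUnion.mpr ⟨p, mem_univ p, mem_filter.mpr ⟨mem_univ x, hp⟩⟩)
  calc (d / 800 : ℝ) = (s : ℝ)⁻¹ * (d * s / 400 / 2) := by field_simp; norm_num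
    _ ≤ (s : ℝ)⁻¹ * 𝔼 x, f x := by gcongr
    _ = -(f ⬝ᵥ discrepancy hm ω) := by
        simp only [dotProduct_discrepancy, hzero, expect_const_zero, zero_sub, mul_neg, neg_neg]
    _ ≤ |f ⬝ᵥ discrepancy hm ω| := neg_le_abs _
    _ ≤ tcNormG m d (discrepancy hm ω) := abs_dotProduct_le_tcNormG (sum_discrepancy hm ω) hlip

end DiscrepancyNorm

section Linearization

theorem setLIntegral_ball_comp_add_le {E : Type*} [NormedAddCommGroup E] [MeasurableSpace E]
    [BorelSpace E] (ν : Measure E) [ν.IsAddRightInvariant] (φ : E → ENNReal) {w : E} {R r : ℝ}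
    (hw : ‖w‖ ≤ r) :
    ∫⁻ u in Metric.ball 0 R, φ (u + w) ∂ν ≤ ∫⁻ u in Metric.ball 0 (R + r), φ u ∂ν := by
  rw [← lintegral_indicator Metric.isOpen_ball.measurableSet,
    ← lintegral_indicator Metric.isOpen_ball.measurableSet,
    ← lintegral_add_right_eq_self (μ := ν) ((Metric.ball 0 (R + r)).indicator φ) w]
  refine lintegral_mono fun u => ?_
  by_cases hu : u ∈ Metric.ball (0 : E) R
  · have : u + w ∈ Metric.ball (0 : E) (R + r) := by
      rw [mem_ball_zero_iff] at hu ⊢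
      linarith [norm_add_le u w]
    rw [Set.indicator_of_mem hu, Set.indicator_of_mem this]
  · rw [Set.indicator_of_notMem hu]
    exact zero_le

variable {E X : Type*} [NormedAddCommGroup E] [NormedSpace ℝ E] [NormedAddCommGroup X]
  [NormedSpace ℝ X]

theorem norm_fderiv_apply_le_seminorm {G : E → X} {u : E} (hG : DifferentiableAt ℝ G u)
    (q : Seminorm ℝ E) {C : ℝ} (hq : ∀ x, ‖G (u + x) - G u‖ ≤ C * q x) (x : E) :
    ‖fderiv ℝ G u x‖ ≤ C * q x := by
  refine le_of_tendsto (hG.hasFDerivAt.hasLineDerivAt x).tendsto_slope_zero.norm ?_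
  filter_upwards [self_mem_nhdsWithin] with t (ht : t ≠ 0)
  calc ‖t⁻¹ • (G (u + t • x) - G u)‖ = |t|⁻¹ * ‖G (u + t • x) - G u‖ := by
        rw [norm_smul, norm_inv, Real.norm_eq_abs]
    _ ≤ |t|⁻¹ * (C * q (t • x)) := by gcongr; exact hq _
    _ = C * q x := by
        rw [map_smul_eq_mul, Real.norm_eq_abs]
        field_simp

theorem enorm_add_sub_le_lintegral_fderiv [CompleteSpace X] {G : E → X} (hG : ContDiff ℝ 1 G)
    (u v : E) :
    ‖G (u + v) - G u‖ₑ ≤ ∫⁻ s in Set.Icc (0 : ℝ) 1, ‖fderiv ℝ G (u + s • v) v‖ₑ := by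
  have deriv (s : ℝ) : HasDerivAt (fun s : ℝ => G (u + s • v)) (fderiv ℝ G (u + s • v) v) s := by
    have line : HasDerivAt (fun s : ℝ => u + s • v) v s := by
      simpa using ((hasDerivAt_id s).smul_const v).const_add u
    exact (hG.differentiable one_ne_zero _).hasFDerivAt.comp_hasDerivAt s line
  have cont : Continuous fun s : ℝ => fderiv ℝ G (u + s • v) v := by
    have := hG.continuous_fderiv one_ne_zero
    fun_prop
  have ftc := intervalIntegral.integral_eq_sub_of_hasDerivAt (fun s _ => deriv s)
    (cont.intervalIntegrable 0 1)
  rw [one_smul, zero_smul, add_zero, intervalIntegral.integral_of_le zero_le_one] at ftc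
  rw [← ftc]
  exact (enorm_integral_le_lintegral_enorm _).trans (lintegral_mono_set Set.Ioc_subset_Icc_self)

variable [FiniteDimensional ℝ E]

theorem setLIntegral_enorm_add_sub_le [CompleteSpace X] [MeasurableSpace E] [BorelSpace E]
    (ν : Measure E) [ν.IsAddHaarMeasure] {G : E → X} (hG : ContDiff ℝ 1 G) {v : E} {R r : ℝ}
    (hv : ‖v‖ ≤ r) :
    ∫⁻ u in Metric.ball 0 R, ‖G (u + v) - G u‖ₑ ∂ν ≤
      ∫⁻ u in Metric.ball 0 (R + r), ‖fderiv ℝ G u v‖ₑ ∂ν := by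
  calc ∫⁻ u in Metric.ball 0 R, ‖G (u + v) - G u‖ₑ ∂ν
      ≤ ∫⁻ u in Metric.ball 0 R, (∫⁻ s in Set.Icc (0 : ℝ) 1, ‖fderiv ℝ G (u + s • v) v‖ₑ) ∂ν :=
        lintegral_mono fun u => enorm_add_sub_le_lintegral_fderiv hG u v
    _ = ∫⁻ s in Set.Icc (0 : ℝ) 1, (∫⁻ u in Metric.ball 0 R, ‖fderiv ℝ G (u + s • v) v‖ₑ ∂ν) := by
        refine lintegral_lintegral_swap (Continuous.measurable ?_).aemeasurable
        simp only [Function.uncurry_def]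
        have := hG.continuous_fderiv one_ne_zero
        fun_prop
    _ ≤ ∫⁻ _s in Set.Icc (0 : ℝ) 1, (∫⁻ u in Metric.ball 0 (R + r), ‖fderiv ℝ G u v‖ₑ ∂ν) := by
        refine setLIntegral_mono measurable_const fun s hs =>
          setLIntegral_ball_comp_add_le ν (fun u => ‖fderiv ℝ G u v‖ₑ) ?_
        rw [norm_smul, Real.norm_of_nonneg hs.1]
        exact (mul_le_of_le_one_left (norm_nonneg v) hs.2).trans hv
    _ = ∫⁻ u in Metric.ball 0 (R + r), ‖fderiv ℝ G u v‖ₑ ∂ν := by simp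

theorem exists_measure_ball_add_le [MeasurableSpace E] [BorelSpace E] (ν : Measure E)
    [ν.IsAddHaarMeasure] {r : ℝ} (hr : 0 < r) :
    ∃ R > 0, ν (Metric.ball 0 (R + r)) ≤ 2 * ν (Metric.ball 0 R) := by
  set k := Module.finrank ℝ E
  set R : ℝ := (2 * k + 1) * r with hR
  have hR0 : 0 < R := by positivity
  have shrink : (1 / 2 : ℝ) ≤ (1 + -(1 / (2 * k + 2))) ^ k := by
    have h : (1 / (2 * k + 2) : ℝ) ≤ 1 := div_le_one_of_le₀ (by linarith) (by positivity)
    refine le_trans ?_ (one_add_mul_le_pow (by linarith) k)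
    field_simp
    linarith
  have radii : (R + r) ^ k ≤ 2 * R ^ k := by
    calc (R + r) ^ k ≤ 2 * (1 + -(1 / (2 * k + 2))) ^ k * (R + r) ^ k :=
          le_mul_of_one_le_left (by positivity) (by linarith)
      _ = 2 * R ^ k := by
          rw [mul_assoc, ← mul_pow, hR]
          congr 2
          field_simp
          ring
  refine ⟨R, hR0, ?_⟩
  rw [ν.addHaar_ball_of_pos _ (by positivity), ν.addHaar_ball_of_pos _ hR0, ← mul_assoc]
  gcongr
  rw [← ENNReal.ofReal_ofNat, ← ENNReal.ofReal_mul zero_le_two]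
  exact ENNReal.ofReal_le_ofReal radii

theorem exists_sum_norm_add_sub_le [CompleteSpace X] {G : E → X} (hG : ContDiff ℝ 1 G)
    {ι : Type*} [Fintype ι] (v : ι → E) {B : ℝ} (hB : ∀ u, ∑ i, ‖fderiv ℝ G u (v i)‖ ≤ B) :
    ∃ u, ∑ i, ‖G (u + v i) - G u‖ ≤ 2 * B := by
  borelize E
  set ν : Measure E := Measure.addHaar
  have hB0 : 0 ≤ B := (sum_nonneg fun _ _ => norm_nonneg _).trans (hB 0)
  obtain ⟨R, hR, hRr⟩ := exists_measure_ball_add_le ν (r := 1 + ∑ i, ‖v i‖) (by positivity)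
  set r := 1 + ∑ i, ‖v i‖
  have hv (i : ι) : ‖v i‖ ≤ r := by
    linarith [single_le_sum (fun j _ => norm_nonneg (v j)) (mem_univ i)]
  have cont := hG.continuous
  have total : ∫⁻ u in Metric.ball 0 R, ∑ i, ‖G (u + v i) - G u‖ₑ ∂ν ≤
      ENNReal.ofReal (2 * B) * ν (Metric.ball 0 R) := by
    calc ∫⁻ u in Metric.ball 0 R, ∑ i, ‖G (u + v i) - G u‖ₑ ∂ν
        = ∑ i, ∫⁻ u in Metric.ball 0 R, ‖G (u + v i) - G u‖ₑ ∂ν :=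
          lintegral_finsetSum _ fun i _ => Continuous.measurable (by fun_prop)
      _ ≤ ∑ i, ∫⁻ u in Metric.ball 0 (R + r), ‖fderiv ℝ G u (v i)‖ₑ ∂ν :=
          sum_le_sum fun i _ => setLIntegral_enorm_add_sub_le ν hG (hv i)
      _ = ∫⁻ u in Metric.ball 0 (R + r), ∑ i, ‖fderiv ℝ G u (v i)‖ₑ ∂ν :=
          (lintegral_finsetSum _ fun i _ => Continuous.measurable (by fun_prop)).symm
      _ ≤ ∫⁻ _u in Metric.ball 0 (R + r), ENNReal.ofReal B ∂ν := by
          refine lintegral_mono fun u => ?_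
          simp only [← ofReal_norm]
          rw [← ENNReal.ofReal_sum_of_nonneg fun i _ => norm_nonneg _]
          exact ENNReal.ofReal_le_ofReal (hB u)
      _ ≤ ENNReal.ofReal B * (2 * ν (Metric.ball 0 R)) := by grw [setLIntegral_const, hRr]
      _ = ENNReal.ofReal (2 * B) * ν (Metric.ball 0 R) := by
          rw [ENNReal.ofReal_mul zero_le_two, ENNReal.ofReal_ofNat]
          ring
  obtain ⟨u, -, hu⟩ := exists_le_setLAverage (μ := ν)
    (Metric.measure_ball_pos ν 0 hR).ne' measure_ball_lt_top.ne
    (f := fun u => ∑ i, ‖G (u + v i) - G u‖ₑ) (Continuous.measurable (by fun_prop)).aemeasurable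
  refine ⟨u, ?_⟩
  rw [setLAverage_eq] at hu
  have := hu.trans (ENNReal.div_le_of_le_mul total)
  simp only [← ofReal_norm] at this
  rw [← ENNReal.ofReal_sum_of_nonneg fun i _ => norm_nonneg _] at this
  exact (ENNReal.ofReal_le_ofReal_iff (by positivity)).mp this

theorem exists_contDiff_approx [CompleteSpace X] {H : E → X} (hH : UniformContinuous H) {b : E → ℝ}
    (hb : ∀ u x, ‖H (u + x) - H u‖ ≤ b x) {ε : ℝ} (hε : 0 < ε) :
    ∃ G : E → X, ContDiff ℝ 1 G ∧ (∀ u, dist (G u) (H u) ≤ ε) ∧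
      ∀ u x, ‖G (u + x) - G u‖ ≤ b x := by
  borelize E
  set ν : Measure E := Measure.addHaar
  obtain ⟨r, hr, hHr⟩ := Metric.uniformContinuous_iff.mp hH ε hε
  let φ : ContDiffBump (0 : E) := ⟨r / 2, r, half_pos hr, half_lt_self hr⟩
  have hφ := φ.hasCompactSupport_normed (μ := ν)
  have integrable (u : E) : Integrable (fun t => φ.normed ν t • H (u - t)) ν :=
    hφ.convolutionExists_left (ContinuousLinearMap.lsmul ℝ ℝ) φ.continuous_normed
      hH.continuous.locallyIntegrable u
  refine ⟨convolution (φ.normed ν) H (ContinuousLinearMap.lsmul ℝ ℝ) ν,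
    hφ.contDiff_convolution_left _ φ.contDiff_normed hH.continuous.locallyIntegrable,
    fun u => φ.dist_normed_convolution_le hH.continuous.aestronglyMeasurable
      fun x hx => (hHr (Metric.mem_ball.mp hx)).le, fun u x => ?_⟩
  calc ‖∫ t, φ.normed ν t • H (u + x - t) ∂ν - ∫ t, φ.normed ν t • H (u - t) ∂ν‖
      = ‖∫ t, φ.normed ν t • (H (u - t + x) - H (u - t)) ∂ν‖ := by
        rw [← integral_sub (integrable _) (integrable _)]
        simp only [← smul_sub, add_sub_right_comm]
    _ ≤ ∫ t, φ.normed ν t * b x ∂ν := by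
        refine norm_integral_le_of_norm_le (φ.integrable_normed.mul_const _)
          (.of_forall fun t => ?_)
        rw [norm_smul, Real.norm_of_nonneg (φ.nonneg_normed t)]
        exact mul_le_mul_of_nonneg_left (hb _ _) (φ.nonneg_normed t)
    _ = b x := by rw [integral_mul_const, φ.integral_normed, one_mul]

theorem sum_seminorm_le_of_forall_linear [CompleteSpace X] (q : Seminorm ℝ E) {C : ℝ} {H : E → X}
    (hlower : ∀ x y, q (x - y) ≤ ‖H x - H y‖)
    (hupper : ∀ x y, ‖H x - H y‖ ≤ C * q (x - y)) {ι : Type*} [Fintype ι] (v : ι → E) {B : ℝ}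
    (hB : ∀ T : E →L[ℝ] X, (∀ x, ‖T x‖ ≤ C * q x) → ∑ i, ‖T (v i)‖ ≤ B) :
    ∑ i, q (v i) ≤ 2 * B := by
  have hq : Continuous q := continuousOn_univ.mp (q.convexOn.continuousOn isOpen_univ)
  obtain ⟨L, -, hqL⟩ := q.bound_of_continuous_normedSpace hq
  have hH : UniformContinuous H := by
    refine (LipschitzWith.of_dist_le' (K := |C| * L) fun x y => ?_).uniformContinuous
    rw [dist_eq_norm, dist_eq_norm, mul_assoc]
    exact (hupper x y).trans (by grw [le_abs_self C, hqL])
  have approx (ε : ℝ) (hε : 0 < ε) : ∑ i, q (v i) ≤ 2 * B + Fintype.card ι * 2 * ε := by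
    obtain ⟨G, hG, hGH, hGq⟩ :=
      exists_contDiff_approx hH (fun u x => by simpa using hupper (u + x) u) hε
    obtain ⟨u, hu⟩ := exists_sum_norm_add_sub_le hG v fun u =>
      hB _ (norm_fderiv_apply_le_seminorm (hG.differentiable one_ne_zero u) q (hGq u))
    have close (i : ι) : q (v i) ≤ ‖G (u + v i) - G u‖ + 2 * ε := by
      have h := hlower (u + v i) u
      rw [add_sub_cancel_left, ← dist_eq_norm] at h
      rw [← dist_eq_norm]
      linarith [dist_triangle4 (H (u + v i)) (G (u + v i)) (G u) (H u), hGH u,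
        dist_comm (H (u + v i)) (G (u + v i)), hGH (u + v i)]
    calc ∑ i, q (v i) ≤ ∑ i, (‖G (u + v i) - G u‖ + 2 * ε) := sum_le_sum fun i _ => close i
      _ ≤ 2 * B + Fintype.card ι * 2 * ε := by
          rw [sum_add_distrib, sum_const, card_univ, nsmul_eq_mul, mul_assoc]
          gcongr
  refine le_of_forall_pos_le_add fun δ hδ => ?_
  have h := approx (δ / (Fintype.card ι * 2 + 1)) (by positivity)
  have : Fintype.card ι * 2 * (δ / (Fintype.card ι * 2 + 1)) ≤ δ := by
    rw [mul_div_assoc', div_le_iff₀ (by positivity)]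
    linarith
  linarith

end Linearization

section L1Valued

variable {Ω : Type*} [MeasurableSpace Ω] {ν : Measure Ω}

theorem integrable_expect {ι : Type*} [Fintype ι] {f : ι → Ω → ℝ} (hf : ∀ i, Integrable (f i) ν) :
    Integrable (fun t => 𝔼 i, f i t) ν := by
  simp only [Fintype.expect_eq_sum_div_card]
  exact (integrable_finsetSum _ fun i _ => hf i).div_const _

theorem integral_expect {ι : Type*} [Fintype ι] {f : ι → Ω → ℝ} (hf : ∀ i, Integrable (f i) ν) :
    ∫ t, 𝔼 i, f i t ∂ν = 𝔼 i, ∫ t, f i t ∂ν := by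
  simp only [Fintype.expect_eq_sum_div_card]
  rw [integral_div, integral_finsetSum _ fun i _ => hf i]

theorem integrable_dotProduct {ι : Type*} [Fintype ι] (g : ι → Lp ℝ 1 ν) (c : ι → ℝ) :
    Integrable (fun t => (fun x => g x t) ⬝ᵥ c) ν :=
  integrable_finsetSum _ fun x _ => (L1.integrable_coeFn (g x)).mul_const (c x)

theorem norm_sum_smul_eq_integral {ι : Type*} [Fintype ι] (g : ι → Lp ℝ 1 ν) (c : ι → ℝ) :
    ‖∑ x, c x • g x‖ = ∫ t, |(fun x => g x t) ⬝ᵥ c| ∂ν := by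
  rw [L1.norm_eq_integral_norm]
  refine integral_congr_ae ?_
  have hsmul : ∀ᵐ t ∂ν, ∀ x, (c x • g x : Lp ℝ 1 ν) t = c x * g x t :=
    ae_all_iff.2 fun x => Lp.coeFn_smul (c x) (g x)
  filter_upwards [Lp.coeFn_fun_finsetSum Finset.univ fun x => c x • g x, hsmul] with t hsum hsmul
  simp only [hsum, hsmul, Real.norm_eq_abs, dotProduct, mul_comm]

theorem norm_sub_eq_integral (f g : Lp ℝ 1 ν) : ‖f - g‖ = ∫ t, |f t - g t| ∂ν := by
  rw [L1.norm_eq_integral_norm]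
  refine integral_congr_ae ?_
  filter_upwards [Lp.coeFn_sub f g] with t ht
  rw [ht, Pi.sub_apply, Real.norm_eq_abs]

theorem sum_expect_norm_sum_smul_le {k d n : ℕ} [NeZero n] (hd : 2 ≤ d)
    (hn : (d : ℝ) ^ 2 * (21 / 20) ^ d ≤ 5000 * n) (g : GPt (2 ^ k) d → Lp ℝ 1 ν) :
    ∑ j : Fin k, 𝔼 ω : DyadicSample d n j, ‖∑ x, dyadicDiscrepancy ω x • g x‖ ≤
      4800 / d * 𝔼 x, ∑ i, ‖g (Function.update x i (Order.succ (x i))) - g x‖ := by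
  have hpair (c : GPt (2 ^ k) d → ℝ) := (integrable_dotProduct g c).abs
  have hincr (x y : GPt (2 ^ k) d) : Integrable (fun t => |g x t - g y t|) ν :=
    ((L1.integrable_coeFn (g x)).sub (L1.integrable_coeFn (g y))).abs
  have hleft (j : Fin k) := integrable_expect fun ω : DyadicSample d n j =>
    hpair (dyadicDiscrepancy ω)
  have hright (x : GPt (2 ^ k) d) := integrable_finsetSum univ fun i (_ : i ∈ univ) =>
    hincr (Function.update x i (Order.succ (x i))) x
  calc ∑ j : Fin k, 𝔼 ω : DyadicSample d n j, ‖∑ x, dyadicDiscrepancy ω x • g x‖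
      = ∫ t, ∑ j : Fin k, 𝔼 ω : DyadicSample d n j,
          |(fun x => g x t) ⬝ᵥ dyadicDiscrepancy ω| ∂ν := by
        rw [integral_finsetSum _ fun j _ => hleft j]
        simp only [norm_sum_smul_eq_integral, integral_expect fun _ => hpair _]
    _ ≤ ∫ t, 4800 / d * meanVariation (fun x => g x t) ∂ν :=
        integral_mono (integrable_finsetSum _ fun j _ => hleft j)
          ((integrable_expect hright).const_mul _)
          fun t => sum_dyadicDiscrepancy_le_meanVariation hd hn fun x => g x t
    _ = 4800 / d * 𝔼 x, ∑ i, ‖g (Function.update x i (Order.succ (x i))) - g x‖ := by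
        simp only [meanVariation]
        rw [integral_const_mul, integral_expect hright]
        simp only [norm_sub_eq_integral, integral_finsetSum _ fun _ _ => hincr _ _]

end L1Valued

theorem sum_expect_seminorm_eq {E J : Type*} [AddCommGroup E] [Module ℝ E] [Fintype J]
    {I : J → Type*} [∀ j, Fintype (I j)] (q : Seminorm ℝ E) (v : ∀ j, I j → E) :
    ∑ j, 𝔼 i, q (v j i) = ∑ a : Σ j, I j, q ((Fintype.card (I a.1) : ℝ)⁻¹ • v a.1 a.2) := by
  simp only [Fintype.sum_sigma, map_smul_eq_mul, norm_inv, Real.norm_natCast,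
    Fintype.expect_eq_sum_div_card, ← div_eq_inv_mul, sum_div]

theorem sum_expect_seminorm_le_of_forall_linear {E X J : Type*} [NormedAddCommGroup E]
    [NormedSpace ℝ E] [FiniteDimensional ℝ E] [NormedAddCommGroup X] [NormedSpace ℝ X]
    [CompleteSpace X] [Fintype J] {I : J → Type*} [∀ j, Fintype (I j)] (q : Seminorm ℝ E) {C : ℝ}
    {H : E → X} (hlower : ∀ x y, q (x - y) ≤ ‖H x - H y‖)
    (hupper : ∀ x y, ‖H x - H y‖ ≤ C * q (x - y)) (v : ∀ j, I j → E) {B : ℝ}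
    (hB : ∀ T : E →L[ℝ] X, (∀ x, ‖T x‖ ≤ C * q x) → ∑ j, 𝔼 i, ‖T (v j i)‖ ≤ B) :
    ∑ j, 𝔼 i, q (v j i) ≤ 2 * B := by
  rw [sum_expect_seminorm_eq]
  exact sum_seminorm_le_of_forall_linear q hlower hupper _ fun T hT =>
    (sum_expect_seminorm_eq ((normSeminorm ℝ X).comp (T : E →ₗ[ℝ] X)) v).symm.trans_le (hB T hT)

section DyadicGrid

variable {Ω : Type*} [MeasurableSpace Ω] {ν : Measure Ω} {k d n : ℕ} [NeZero n]

theorem dyadicDiscrepancy_mem_zeroMass {j : Fin k} (ω : DyadicSample d n j) :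
    dyadicDiscrepancy ω ∈ zeroMass (GPt (2 ^ k) d) :=
  sum_discrepancy _ ω

theorem sum_expect_norm_dyadicDiscrepancy_le (hd : 2 ≤ d)
    (hn : (d : ℝ) ^ 2 * (21 / 20) ^ d ≤ 5000 * n) {C : ℝ} (hC : 0 ≤ C)
    (T : zeroMass (GPt (2 ^ k) d) →ₗ[ℝ] Lp ℝ 1 ν) (hT : ∀ μ, ‖T μ‖ ≤ C * tcSeminorm (2 ^ k) d μ) :
    ∑ j : Fin k, 𝔼 ω : DyadicSample d n j, ‖T ⟨_, dyadicDiscrepancy_mem_zeroMass ω⟩‖ ≤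
      4800 * C := by
  obtain ⟨S, hS⟩ := T.exists_extend
  have extends_T (μ : zeroMass (GPt (2 ^ k) d)) : S μ = T μ := LinearMap.congr_fun hS μ
  set g : GPt (2 ^ k) d → Lp ℝ 1 ν := fun x => S (Pi.single x 1)
  have expand (μ : zeroMass (GPt (2 ^ k) d)) : T μ = ∑ x, (μ : GPt (2 ^ k) d → ℝ) x • g x := by
    conv_lhs => rw [← extends_T, pi_eq_sum_univ' (μ : GPt (2 ^ k) d → ℝ), map_sum]
    simp only [map_smul, g]
  have edge (x : GPt (2 ^ k) d) (i : Fin d) :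
      ‖g (Function.update x i (Order.succ (x i))) - g x‖ ≤ C := by
    set y := Function.update x i (Order.succ (x i))
    have mass : (Pi.single y 1 - Pi.single x 1 : GPt (2 ^ k) d → ℝ) ∈ zeroMass _ := by
      simp [zeroMass]
    calc ‖g y - g x‖ = ‖T ⟨_, mass⟩‖ := by rw [← extends_T, map_sub]
      _ ≤ C * tcNormG (2 ^ k) d (Pi.single y 1 - Pi.single x 1) := hT _
      _ ≤ C * 1 := by
          grw [tcNormG_single_sub_single_le, gdistM_update_succ_le]
      _ = C := mul_one C
  simp only [expand]
  calc _ ≤ 4800 / d * 𝔼 x, ∑ i, ‖g (Function.update x i (Order.succ (x i))) - g x‖ :=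
        sum_expect_norm_sum_smul_le hd hn g
    _ ≤ 4800 / d * (d * C) := by
        gcongr
        refine expect_le univ_nonempty fun x _ => ?_
        simpa using sum_le_card_nsmul univ _ C fun i _ => edge x i
    _ = 4800 * C := by field_simp

theorem div_le_tcSeminorm_dyadicDiscrepancy (hd : 2 ≤ d) (hn : (n : ℝ) ≤ (11 / 10) ^ d)
    {j : Fin k} (ω : DyadicSample d n j) :
    (d : ℝ) / 800 ≤ tcSeminorm (2 ^ k) d ⟨_, dyadicDiscrepancy_mem_zeroMass ω⟩ :=
  div_le_tcNormG_discrepancy _ (le_self_pow₀ one_le_two (Nat.succ_ne_zero j)) hd hn ω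

theorem mul_le_of_biLipschitz_dyadic (hd : 2 ≤ d) {C : ℝ} (hC : 0 ≤ C)
    {F : zeroMass (GPt (2 ^ k) d) → Lp ℝ 1 ν}
    (hlower : ∀ μ ξ, tcSeminorm (2 ^ k) d (μ - ξ) ≤ ‖F μ - F ξ‖)
    (hupper : ∀ μ ξ, ‖F μ - F ξ‖ ≤ C * tcSeminorm (2 ^ k) d (μ - ξ)) :
    (d : ℝ) * k ≤ 7680000 * C := by
  obtain ⟨n, hn1, hn, hdn⟩ := exists_sample_size d
  have : NeZero n := ⟨by omega⟩
  have upper : ∑ j : Fin k, 𝔼 ω : DyadicSample d n j,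
      tcSeminorm (2 ^ k) d ⟨_, dyadicDiscrepancy_mem_zeroMass ω⟩ ≤ 2 * (4800 * C) :=
    sum_expect_seminorm_le_of_forall_linear (I := DyadicSample d n) _ hlower hupper
      (fun _ ω => ⟨_, dyadicDiscrepancy_mem_zeroMass ω⟩) fun T hT =>
        sum_expect_norm_dyadicDiscrepancy_le hd hdn hC T.toLinearMap hT
  have lower : ∑ _j : Fin k, (d : ℝ) / 800 ≤ ∑ j : Fin k, 𝔼 ω : DyadicSample d n j,
      tcSeminorm (2 ^ k) d ⟨_, dyadicDiscrepancy_mem_zeroMass ω⟩ :=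
    sum_le_sum fun j _ => le_expect univ_nonempty fun ω _ =>
      div_le_tcSeminorm_dyadicDiscrepancy hd hn ω
  have := lower.trans upper
  rw [sum_const, card_univ, Fintype.card_fin, nsmul_eq_mul] at this
  linarith

end DyadicGrid

section Pushforward

theorem dotProduct_funOnFinite_linearMap {X Y : Type*} [Fintype X] [Fintype Y] (φ : X → Y)
    (f : Y → ℝ) (μ : X → ℝ) : f ⬝ᵥ FunOnFinite.linearMap ℝ ℝ φ μ = (f ∘ φ) ⬝ᵥ μ := by
  classical
  simp only [dotProduct, FunOnFinite.linearMap_apply_apply, mul_sum, sum_filter, mul_ite, mul_zero]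
  rw [sum_comm]
  simp

/-- The push-forward of signed measures of total mass zero along a map of finite sets. -/
def pushforward {X Y : Type*} [Fintype X] [Fintype Y] (φ : X → Y) : zeroMass X →ₗ[ℝ] zeroMass Y :=
  (FunOnFinite.linearMap ℝ ℝ φ).restrict fun μ (hμ : ∑ x, μ x = 0) => by
    rw [← one_dotProduct] at hμ
    change ∑ y, FunOnFinite.linearMap ℝ ℝ φ μ y = 0
    rw [← one_dotProduct, dotProduct_funOnFinite_linearMap]
    exact hμ

theorem pushforward_pushforward {X Y : Type*} [Fintype X] [Fintype Y] {φ : X → Y} {ψ : Y → X}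
    (h : Function.LeftInverse ψ φ) (μ : zeroMass X) : pushforward ψ (pushforward φ μ) = μ := by
  ext1
  change FunOnFinite.linearMap ℝ ℝ ψ (FunOnFinite.linearMap ℝ ℝ φ μ) = μ
  rw [← LinearMap.comp_apply, ← FunOnFinite.linearMap_comp, h.comp_eq_id,
    FunOnFinite.linearMap_id, LinearMap.id_apply]

theorem tcSeminorm_pushforward_le {m d m' d' : ℕ} {φ : GPt m d → GPt m' d'}
    (hφ : ∀ x y, gdistM (φ x) (φ y) ≤ gdistM x y) (μ : zeroMass (GPt m d)) :
    tcSeminorm m' d' (pushforward φ μ) ≤ tcSeminorm m d μ :=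
  tcNormG_le fun f hf => by
    change |f ⬝ᵥ FunOnFinite.linearMap ℝ ℝ φ μ| ≤ _
    rw [dotProduct_funOnFinite_linearMap]
    exact abs_dotProduct_le_tcNormG μ.2 fun x y => (hf _ _).trans (hφ x y)

theorem tcSeminorm_pushforward_castLE {a m d : ℕ} [NeZero a] (h : a ≤ m) (μ : zeroMass (GPt a d)) :
    tcSeminorm m d (pushforward (fun x i => Fin.castLE h (x i)) μ) = tcSeminorm a d μ := by
  let clamp (y : GPt m d) : GPt a d :=
    fun i => ⟨min (y i : ℕ) (a - 1), min_lt_of_right_lt (Nat.sub_one_lt (NeZero.ne a))⟩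
  have clamp_castLE : Function.LeftInverse clamp fun x i => Fin.castLE h (x i) := fun x => by
    funext i
    exact Fin.ext (min_eq_left (Nat.le_sub_one_of_lt (x i).2))
  have clamp_lipschitz (x y : GPt m d) : gdistM (clamp x) (clamp y) ≤ gdistM x y := by
    refine sum_le_sum fun i _ => ?_
    simp only [clamp, Nat.cast_min]
    exact (abs_min_sub_min_le_max _ _ _ _).trans (by simp)
  have castLE_lipschitz (x y : GPt a d) :
      gdistM (fun i => Fin.castLE h (x i)) (fun i => Fin.castLE h (y i)) ≤ gdistM x y := le_rfl
  refine le_antisymm (tcSeminorm_pushforward_le castLE_lipschitz μ) ?_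
  conv_lhs => rw [← pushforward_pushforward clamp_castLE μ]
  exact tcSeminorm_pushforward_le clamp_lipschitz _

end Pushforward

theorem log_le_two_mul_natLog {m : ℕ} (hm : 2 ≤ m) : Real.log m ≤ 2 * Nat.log 2 m := by
  have hlt : (m : ℝ) ≤ 2 ^ (Nat.log 2 m + 1) := mod_cast (Nat.lt_pow_succ_log_self one_lt_two m).le
  have hpos : (1 : ℝ) ≤ Nat.log 2 m := mod_cast Nat.log_pos one_lt_two hm
  calc Real.log m ≤ Real.log (2 ^ (Nat.log 2 m + 1)) := Real.log_le_log (by positivity) hlt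
    _ = (Nat.log 2 m + 1) * Real.log 2 := by rw [Real.log_pow]; push_cast; rfl
    _ ≤ (Nat.log 2 m + 1) * 1 := by
        gcongr
        linarith [Real.log_two_lt_d9]
    _ ≤ 2 * Nat.log 2 m := by linarith

end TCGrid

theorem tc_grid_L1_distortion_lower_bound_general {Ω : Type*} [MeasurableSpace Ω] {ν : Measure Ω}
    {m d : ℕ} (hm : 2 ≤ m) (hd : 2 ≤ d) {C : ℝ} (hC : 0 ≤ C)
    {F : {μ : GPt m d → ℝ // ∑ x, μ x = 0} → Lp ℝ 1 ν}
    (hF : ∀ μ ξ, tcNormG m d (μ.1 - ξ.1) ≤ ‖F μ - F ξ‖ ∧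
      ‖F μ - F ξ‖ ≤ C * tcNormG m d (μ.1 - ξ.1)) :
    d * Real.log m ≤ 16000000 * C := by
  have scales : 2 ^ Nat.log 2 m ≤ m := Nat.pow_log_le_self 2 (by omega)
  let embed : TCGrid.zeroMass (GPt (2 ^ Nat.log 2 m) d) →ₗ[ℝ] TCGrid.zeroMass (GPt m d) :=
    TCGrid.pushforward fun x i => Fin.castLE scales (x i)
  have isometric (μ ξ) : TCGrid.tcSeminorm (2 ^ Nat.log 2 m) d (μ - ξ) =
      tcNormG m d ((embed μ).1 - (embed ξ).1) := by
    rw [← TCGrid.tcSeminorm_pushforward_castLE scales, map_sub]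
    rfl
  have dyadic : (d : ℝ) * Nat.log 2 m ≤ 7680000 * C :=
    TCGrid.mul_le_of_biLipschitz_dyadic hd hC (F := fun μ => F (embed μ))
      (fun μ ξ => isometric μ ξ ▸ (hF _ _).1) fun μ ξ => isometric μ ξ ▸ (hF _ _).2
  calc d * Real.log m ≤ d * (2 * Nat.log 2 m) := by grw [TCGrid.log_le_two_mul_natLog hm]
    _ ≤ 16000000 * C := by linarith

/-- Any embedding of `TC({1,…,m}^d)` into `L_1` with bi-Lipschitz distortion at most `C`
satisfies `C ≥ c·d·log m` for a universal constant `c > 0`. -/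
theorem tc_grid_L1_distortion_lower_bound :
    ∃ c : ℝ, 0 < c ∧ ∀ (m d : ℕ), 2 ≤ m → 2 ≤ d → ∀ C : ℝ, 1 ≤ C →
      ∀ F : {μ : GPt m d → ℝ // ∑ x, μ x = 0} → L1Space,
        (∀ μ ν : {μ : GPt m d → ℝ // ∑ x, μ x = 0},
            tcNormG m d (μ.1 - ν.1) ≤ ‖F μ - F ν‖ ∧
            ‖F μ - F ν‖ ≤ C * tcNormG m d (μ.1 - ν.1)) →
        c * d * Real.log m ≤ C := by
  refine ⟨1 / 16000000, by norm_num, fun m d hm hd C hC F hF => ?_⟩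
  linarith [tc_grid_L1_distortion_lower_bound_general hm hd (zero_le_one.trans hC) hF]
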